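/- Let q ≥ 2 be an integer and 1 − 1/(2q) < H < 1. Then (1/(−log ε)) · Σ_{n≥1} (1/n) · P(|V_n| > ε n^{2−2q(1−H)}) converges to 1/(1 − q(1−H)) as ε → 0⁺ (Spitzer's theorem for the variations of fractional Brownian motion, non-central regime). -/

import Mathlib

open MeasureTheory ProbabilityTheory Filter Real Topology

/-- A (centered) fractional Brownian motion with Hurst parameter `H`:
all finite-dimensional distributions are centered Gaussian (equivalently, every finite
linear combination of values of the process is a centered real Gaussian), with covariance
`E (B s * B t) = (s^(2H) + t^(2H) - |t-s|^(2H)) / 2` for nonnegative times. -/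
structure IsFractionalBrownianMotion {Ω : Type*} [MeasureSpace Ω]
    (B : ℝ → Ω → ℝ) (H : ℝ) : Prop where
  measurable : ∀ t : ℝ, Measurable (B t)
  gaussian_fdd : ∀ (n : ℕ) (t : Fin n → ℝ), (∀ i, 0 ≤ t i) → ∀ c : Fin n → ℝ,
    ∃ v : NNReal,
      Measure.map (fun ω => ∑ i, c i * B (t i) ω) (ℙ : Measure Ω) = gaussianReal 0 v
  covariance : ∀ s t : ℝ, 0 ≤ s → 0 ≤ t →
    ∫ ω, B s ω * B t ω ∂(ℙ : Measure Ω)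
      = (s ^ (2 * H) + t ^ (2 * H) - |t - s| ^ (2 * H)) / 2

/-- `V_n = ∑_{k=0}^{n-1} H_q (n^H (B_{(k+1)/n} - B_{k/n}))`, where `H_q` is the Hermite
polynomial of degree `q`. -/
noncomputable def hermiteVariation {Ω : Type*} [MeasureSpace Ω]
    (B : ℝ → Ω → ℝ) (H : ℝ) (q n : ℕ) (ω : Ω) : ℝ :=
  ∑ k ∈ Finset.range n,
    Polynomial.aeval
      ((n : ℝ) ^ H * (B (((k : ℝ) + 1) / n) ω - B ((k : ℝ) / n) ω))
      (Polynomial.hermite q)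

/-!
Put `a = 1 - q (1 - H)`, so that `a > 1/2`, and `Z n = V n / n ^ a`; the event in the series is
`{ε n ^ a < |Z n|}`. Since `Z` is bounded in `L²`, Chebyshev's inequality makes the terms with
`n ≥ ε ^ (-1 / a)` contribute `O(1)`. The remaining ones contribute
`∑ 1 / n ∼ (1 / a) log (1 / ε)`, provided that `P (|Z n| ≤ δ) → 0` as `δ → 0`, uniformly in `n`.

This anticoncentration avoids any limit theorem for `Z`. Rotate two independent copies of the
underlying Gaussian vector: along a rational parametrization of the circle, `Z n` becomes, up to an
explicit factor, a polynomial of degree at most `2 q` in the parameter, so if it is at most `δ` at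
more than `2 q` of `N` fixed angles, then both copies are at most `C δ` with `C = C(q, N)`. As every
rotated copy has the original law, `P (|Z n| ≤ δ) ≤ 2 q / N + P (|Z n| ≤ C δ) ^ 2`. Hence
`lim_{δ → 0} sup_n P (|Z n| ≤ δ)` is `0` as soon as it is less than `1`, and the latter follows by
testing `Z n` against `V 1 = H_q(B 1)`, with which its correlation is bounded below.
-/

/-! ### Spitzer series -/

lemma rpow_sub_one_le_sub_div {x p : ℝ} (hx : 0 ≤ x) (hp0 : p ≠ 0) (hp1 : p ≤ 1)
    (h : x ≠ 0 ∨ 0 < p) : (x + 1) ^ (p - 1) ≤ ((x + 1) ^ p - x ^ p) / p := by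
  have hcont : ContinuousOn (fun y : ℝ => y ^ p / p) (Set.Icc x (x + 1)) := fun y hy =>
    ((continuousAt_rpow_const y p (h.imp (fun hx0 =>
      ((hx.lt_of_ne' hx0).trans_le hy.1).ne') le_of_lt)).div_const p).continuousWithinAt
  have hderiv : ∀ y ∈ Set.Ioo x (x + 1),
      HasDerivAt (fun y : ℝ => y ^ p / p) (y ^ (p - 1)) y := fun y hy => by
    simpa [hp0] using
      (hasDerivAt_rpow_const (p := p) (Or.inl (hx.trans_lt hy.1).ne')).div_const p
  obtain ⟨c, hc, hslope⟩ := exists_hasDerivAt_eq_slope _ _ (lt_add_one x) hcont hderiv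
  calc (x + 1) ^ (p - 1) ≤ c ^ (p - 1) :=
        rpow_le_rpow_of_nonpos (hx.trans_lt hc.1) hc.2.le (by linarith)
    _ = ((x + 1) ^ p - x ^ p) / p := by rw [hslope]; ring

lemma sum_rpow_sub_one_le {x p : ℝ} (hx : 0 ≤ x) (hp0 : p ≠ 0) (hp1 : p ≤ 1)
    (h : x ≠ 0 ∨ 0 < p) (n : ℕ) :
    ∑ i ∈ Finset.range n, (x + i + 1) ^ (p - 1) ≤ ((x + n) ^ p - x ^ p) / p := by
  calc ∑ i ∈ Finset.range n, (x + i + 1) ^ (p - 1)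
      ≤ ∑ i ∈ Finset.range n, ((x + ↑(i + 1)) ^ p / p - (x + i) ^ p / p) := by
        refine Finset.sum_le_sum fun i _ => ?_
        have hxi : x + i ≠ 0 ∨ 0 < p := h.imp_left fun hx0 => by positivity
        simpa only [Nat.cast_succ, add_assoc, sub_div] using
          rpow_sub_one_le_sub_div (by positivity) hp0 hp1 hxi
    _ = ((x + n) ^ p - x ^ p) / p := by
        rw [Finset.sum_range_sub fun i : ℕ => (x + i) ^ p / p]
        simp [sub_div]

lemma sum_rpow_neg_sub_one_le {x s : ℝ} (hx : 0 < x) (hs : 0 < s) (n : ℕ) :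
    ∑ i ∈ Finset.range n, (x + i + 1) ^ (-s - 1) ≤ x ^ (-s) / s := by
  refine (sum_rpow_sub_one_le hx.le (neg_ne_zero.2 hs.ne') (by linarith) (Or.inl hx.ne') n).trans ?_
  rw [div_neg, ← neg_div, neg_sub]
  gcongr
  exact sub_le_self _ (by positivity)

lemma tendsto_div_of_affine_bounds {α : Type*} {l : Filter α} {u L : α → ℝ} {A K : ℝ}
    (hL : Tendsto L l atTop) (hupper : ∀ᶠ x in l, u x ≤ A * L x + K)
    (hlower : ∀ A' < A, ∃ K', ∀ᶠ x in l, A' * L x + K' ≤ u x) :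
    Tendsto (fun x => u x / L x) l (𝓝 A) := by
  refine tendsto_order.2 ⟨fun b hb => ?_, fun b hb => ?_⟩
  · obtain ⟨A', hbA', hA'⟩ := exists_between hb
    obtain ⟨K', hK'⟩ := hlower A' hA'
    filter_upwards [hK', hL.eventually_gt_atTop 0,
      (hL.const_mul_atTop (sub_pos.2 hbA')).eventually_gt_atTop (-K')] with x hux hx0 hx
    rw [lt_div_iff₀ hx0]
    linarith
  · filter_upwards [hupper, hL.eventually_gt_atTop 0,
      (hL.const_mul_atTop (sub_pos.2 hb)).eventually_gt_atTop K] with x hux hx0 hx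
    rw [div_lt_iff₀ hx0]
    linarith

/-- The series `∑ f (x n ^ a) / n` over `n ≥ 1`, in Spitzer's theorem for tails `f n` of the
`n`-th normalised variable; the summation index is shifted by one. -/
noncomputable def spitzerSeries (a : ℝ) (f : ℕ → ℝ → ℝ) (x : ℝ) : ℝ :=
  ∑' n : ℕ, 1 / ((n : ℝ) + 1) * f n (x * ((n : ℝ) + 1) ^ a)

section Spitzer

variable {a r C : ℝ} {f : ℕ → ℝ → ℝ}

lemma sum_one_div_add_one_eq_harmonic (n : ℕ) :
    ∑ i ∈ Finset.range n, 1 / ((i : ℝ) + 1) = harmonic n := by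
  simp [harmonic]

lemma sum_spitzer_tail_le (ha : 0 < a) (hr : 0 < r) (hC : 0 ≤ C)
    (hdecay : ∀ n x, 0 < x → f n x ≤ C / x ^ r) {ε : ℝ} (hε : 0 < ε) {M : ℕ}
    (hM : ε ^ (-1 / a) ≤ M) (n : ℕ) :
    ∑ i ∈ Finset.range n, 1 / (((M + i : ℕ) : ℝ) + 1) * f (M + i) (ε * (((M + i : ℕ) : ℝ) + 1) ^ a)
      ≤ C / (a * r) := by
  have hM0 : (0 : ℝ) < M := (rpow_pos_of_pos hε _).trans_le hM
  have hterm (i : ℕ) :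
      1 / (((M + i : ℕ) : ℝ) + 1) * f (M + i) (ε * (((M + i : ℕ) : ℝ) + 1) ^ a)
        ≤ C * ε ^ (-r) * (M + i + 1 : ℝ) ^ (-(a * r) - 1) := by
    have hi : (0 : ℝ) < M + i + 1 := by positivity
    push_cast
    calc 1 / (M + i + 1 : ℝ) * f (M + i) (ε * (M + i + 1 : ℝ) ^ a)
        ≤ 1 / (M + i + 1 : ℝ) * (C / (ε * (M + i + 1 : ℝ) ^ a) ^ r) := by
          gcongr
          exact hdecay _ _ (by positivity)
      _ = C * ε ^ (-r) * (M + i + 1 : ℝ) ^ (-(a * r) - 1) := by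
          rw [mul_rpow hε.le (by positivity), ← rpow_mul hi.le, rpow_sub_one hi.ne',
            rpow_neg hε.le, rpow_neg hi.le]
          field_simp
  have hMr : ε ^ (-r) * (M : ℝ) ^ (-(a * r)) ≤ 1 := by
    calc ε ^ (-r) * (M : ℝ) ^ (-(a * r)) ≤ ε ^ (-r) * (ε ^ (-1 / a)) ^ (-(a * r)) := by
          gcongr ?_ * ?_
          exact rpow_le_rpow_of_nonpos (by positivity) hM (by nlinarith)
      _ = 1 := by
          rw [← rpow_mul hε.le, ← rpow_add hε, show -r + -1 / a * -(a * r) = 0 by field_simp; ring,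
            rpow_zero]
  calc _ ≤ ∑ i ∈ Finset.range n, C * ε ^ (-r) * (M + i + 1 : ℝ) ^ (-(a * r) - 1) :=
        Finset.sum_le_sum fun i _ => hterm i
    _ ≤ C * ε ^ (-r) * ((M : ℝ) ^ (-(a * r)) / (a * r)) := by
        rw [← Finset.mul_sum]
        gcongr
        exact sum_rpow_neg_sub_one_le hM0 (mul_pos ha hr) n
    _ = C / (a * r) * (ε ^ (-r) * (M : ℝ) ^ (-(a * r))) := by ring
    _ ≤ C / (a * r) := mul_le_of_le_one_right (by positivity) hMr

lemma sum_spitzer_le (ha : 0 < a) (hr : 0 < r) (hf0 : ∀ n x, 0 ≤ f n x) (hf1 : ∀ n x, f n x ≤ 1)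
    (hC : 0 ≤ C) (hdecay : ∀ n x, 0 < x → f n x ≤ C / x ^ r) {ε : ℝ} (hε : 0 < ε) (hε1 : ε ≤ 1)
    (n : ℕ) :
    ∑ i ∈ Finset.range n, 1 / ((i : ℝ) + 1) * f i (ε * ((i : ℝ) + 1) ^ a)
      ≤ 1 / a * (-log ε) + (1 + log 2 + C / (a * r)) := by
  set y : ℝ := ε ^ (-1 / a) with hy
  have hy1 : 1 ≤ y := one_le_rpow_of_pos_of_le_one_of_nonpos hε hε1
    (div_nonpos_of_nonpos_of_nonneg (by norm_num) ha.le)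
  set M : ℕ := ⌈y⌉₊
  have hy0 : 0 < y := zero_lt_one.trans_le hy1
  have hM : (M : ℝ) ≤ 2 * y := (Nat.ceil_lt_add_one hy0.le).le.trans (by linarith)
  have : (0 : ℝ) < M := hy0.trans_le (Nat.le_ceil y)
  have hhead : ∑ i ∈ Finset.range M, 1 / ((i : ℝ) + 1) * f i (ε * ((i : ℝ) + 1) ^ a)
      ≤ 1 / a * (-log ε) + (1 + log 2) := by
    calc _ ≤ ∑ i ∈ Finset.range M, 1 / ((i : ℝ) + 1) :=
          Finset.sum_le_sum fun i _ => mul_le_of_le_one_right (by positivity) (hf1 _ _)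
      _ ≤ 1 + log M := by
          rw [sum_one_div_add_one_eq_harmonic]
          exact harmonic_le_one_add_log M
      _ ≤ 1 + log (2 * y) := by gcongr
      _ = 1 / a * (-log ε) + (1 + log 2) := by
          rw [log_mul two_ne_zero hy0.ne', hy, log_rpow hε]
          ring
  calc ∑ i ∈ Finset.range n, 1 / ((i : ℝ) + 1) * f i (ε * ((i : ℝ) + 1) ^ a)
      ≤ ∑ i ∈ Finset.range (M + n), 1 / ((i : ℝ) + 1) * f i (ε * ((i : ℝ) + 1) ^ a) :=
        Finset.sum_le_sum_of_subset_of_nonneg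
          (Finset.range_subset_range.2 (Nat.le_add_left n M))
          fun i _ _ => mul_nonneg (by positivity) (hf0 _ _)
    _ ≤ (1 / a * (-log ε) + (1 + log 2)) + C / (a * r) := by
        rw [Finset.sum_range_add]
        exact add_le_add hhead (sum_spitzer_tail_le ha hr hC hdecay hε (Nat.le_ceil y) n)
    _ = _ := by ring

lemma le_sum_spitzer (ha : 0 < a) {b δ ε : ℝ} (hδ : 0 < δ) (hε : 0 < ε)
    (hf : ∀ n x, x ≤ δ → b ≤ f n x) (hb : 0 ≤ b) :
    b / a * (-log ε) + b / a * log δ ≤ ∑ i ∈ Finset.range ⌊(δ / ε) ^ (1 / a)⌋₊,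
      1 / ((i : ℝ) + 1) * f i (ε * ((i : ℝ) + 1) ^ a) := by
  set y : ℝ := (δ / ε) ^ (1 / a) with hy
  have hsmall : ∀ i ∈ Finset.range ⌊y⌋₊, ε * ((i : ℝ) + 1) ^ a ≤ δ := fun i hi => by
    have hiy : (i : ℝ) + 1 ≤ y := by
      exact_mod_cast (Nat.le_floor_iff (by positivity)).1 (Finset.mem_range.1 hi)
    calc ε * ((i : ℝ) + 1) ^ a ≤ ε * y ^ a := by gcongr
      _ = δ := by
          rw [hy, ← rpow_mul (by positivity), one_div_mul_cancel ha.ne', rpow_one,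
            mul_div_cancel₀ _ hε.ne']
  calc b / a * (-log ε) + b / a * log δ = b * log y := by
        rw [hy, log_rpow (by positivity), log_div hδ.ne' hε.ne']
        ring
    _ ≤ b * harmonic ⌊y⌋₊ := by
        gcongr
        exact log_le_harmonic_floor y (by positivity)
    _ = ∑ i ∈ Finset.range ⌊y⌋₊, 1 / ((i : ℝ) + 1) * b := by
        rw [← Finset.sum_mul, sum_one_div_add_one_eq_harmonic, mul_comm]
    _ ≤ _ := Finset.sum_le_sum fun i hi => by
        gcongr
        exact hf _ _ (hsmall i hi)

theorem tendsto_spitzerSeries_div_log (ha : 0 < a) (hr : 0 < r) (hf0 : ∀ n x, 0 ≤ f n x)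
    (hf1 : ∀ n x, f n x ≤ 1) (hC : 0 ≤ C) (hdecay : ∀ n x, 0 < x → f n x ≤ C / x ^ r)
    (hzero : ∀ b < 1, ∃ δ > 0, ∀ n x, x ≤ δ → b ≤ f n x) :
    Tendsto (fun ε => spitzerSeries a f ε / -log ε) (𝓝[>] 0) (𝓝 (1 / a)) := by
  have hlog : Tendsto (fun ε => -log ε) (𝓝[>] 0) atTop :=
    tendsto_neg_atBot_atTop.comp tendsto_log_nhdsGT_zero
  have hbound : ∀ᶠ ε in 𝓝[>] (0 : ℝ), ∀ n,
      ∑ i ∈ Finset.range n, 1 / ((i : ℝ) + 1) * f i (ε * ((i : ℝ) + 1) ^ a)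
        ≤ 1 / a * (-log ε) + (1 + log 2 + C / (a * r)) := by
    filter_upwards [Ioc_mem_nhdsGT one_pos] with ε hε n
    exact sum_spitzer_le ha hr hf0 hf1 hC hdecay hε.1 hε.2 n
  have hterm (ε : ℝ) (n : ℕ) : 0 ≤ 1 / ((n : ℝ) + 1) * f n (ε * ((n : ℝ) + 1) ^ a) :=
    mul_nonneg (by positivity) (hf0 _ _)
  refine tendsto_div_of_affine_bounds hlog (K := 1 + log 2 + C / (a * r)) ?_ fun A' hA' => ?_
  · filter_upwards [hbound] with ε hε
    exact Real.tsum_le_of_sum_range_le (hterm ε) hε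
  · obtain ⟨b, hb, hb1⟩ := exists_between (max_lt ((lt_div_iff₀ ha).1 hA') one_pos)
    obtain ⟨δ, hδ, hf⟩ := hzero b hb1
    refine ⟨b / a * log δ, ?_⟩
    filter_upwards [hbound, hlog.eventually_ge_atTop 0, self_mem_nhdsWithin] with ε hε hlog0 hε0
    have hA'b : A' ≤ b / a := (le_div_iff₀ ha).2 ((le_max_left _ _).trans hb.le)
    calc A' * -log ε + b / a * log δ ≤ b / a * -log ε + b / a * log δ := by gcongr
      _ ≤ _ := le_sum_spitzer ha hδ hε0 hf ((le_max_right _ _).trans hb.le)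
      _ ≤ spitzerSeries a f ε :=
          (summable_of_sum_range_le (hterm ε) hε).sum_le_tsum _ fun i _ => hterm ε i

end Spitzer

theorem tendsto_spitzerSeries_measureReal {Ω : Type*} [MeasurableSpace Ω] {P : Measure Ω}
    [IsProbabilityMeasure P] {Z : ℕ → Ω → ℝ} {a r C : ℝ} (ha : 0 < a) (hr : 0 < r)
    (hZm : ∀ n, AEMeasurable (Z n) P) (hZi : ∀ n, Integrable (fun ω => |Z n ω| ^ r) P)
    (hZr : ∀ n, ∫ ω, |Z n ω| ^ r ∂P ≤ C)
    (hZ0 : ∀ η > 0, ∃ δ > 0, ∀ n, P.real {ω | |Z n ω| ≤ δ} ≤ η) :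
    Tendsto (fun ε => spitzerSeries a (fun n x => P.real {ω | x < |Z n ω|}) ε / -log ε)
      (𝓝[>] 0) (𝓝 (1 / a)) := by
  refine tendsto_spitzerSeries_div_log ha hr (fun n x => measureReal_nonneg)
    (fun n x => measureReal_le_one) (C := C)
    ((integral_nonneg fun ω => by positivity).trans (hZr 0)) (fun n x hx => ?_) fun b hb => ?_
  · rw [le_div_iff₀' (by positivity)]
    calc x ^ r * P.real {ω | x < |Z n ω|} ≤ x ^ r * P.real {ω | x ^ r ≤ |Z n ω| ^ r} := by
          gcongr x ^ r * ?_
          exact measureReal_mono fun ω (hω : x < |Z n ω|) => rpow_le_rpow hx.le hω.le hr.le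
      _ ≤ ∫ ω, |Z n ω| ^ r ∂P :=
          mul_meas_ge_le_integral_of_nonneg (ae_of_all _ fun ω => by positivity) (hZi n) _
      _ ≤ C := hZr n
  · obtain ⟨δ, hδ, hsmall⟩ := hZ0 (1 - b) (sub_pos.2 hb)
    refine ⟨δ, hδ, fun n x hx => ?_⟩
    have hcompl : {ω | δ < |Z n ω|} = {ω | |Z n ω| ≤ δ}ᶜ := by ext ω; simp
    calc b ≤ 1 - P.real {ω | |Z n ω| ≤ δ} := by linarith [hsmall n]
      _ = P.real {ω | δ < |Z n ω|} := by
          rw [hcompl, probReal_compl_eq_one_sub₀]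
          exact nullMeasurableSet_le (hZm n).abs aemeasurable_const
      _ ≤ P.real {ω | x < |Z n ω|} := measureReal_mono fun ω hω => hx.trans_lt hω

/-! ### Hermite polynomials of Gaussian pairs -/

section PolynomialMoments

variable {Ω : Type*} [MeasurableSpace Ω] {P : Measure Ω} [IsFiniteMeasure P] {X : Ω → ℝ}

lemma memLp_pow_of_forall_memLp (hX : ∀ p : ENNReal, p ≠ ⊤ → MemLp X p P) (k : ℕ) :
    ∀ p : ENNReal, p ≠ ⊤ → MemLp (fun ω => X ω ^ k) p P := by
  induction k with
  | zero => exact fun p _ => by simpa using memLp_const (1 : ℝ)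
  | succ k ih =>
    intro p hp
    have hp2 : p * 2 ≠ ⊤ := ENNReal.mul_ne_top hp ENNReal.ofNat_ne_top
    have : ENNReal.HolderTriple (p * 2) (p * 2) p := ⟨by
      rw [ENNReal.mul_inv (by simp) (by simp), ← mul_add, ENNReal.inv_two_add_inv_two, mul_one]⟩
    simpa only [pow_succ', Pi.mul_def] using (ih _ hp2).mul (hX _ hp2)

lemma memLp_eval_of_forall_memLp (hX : ∀ p : ENNReal, p ≠ ⊤ → MemLp X p P) (f : Polynomial ℝ)
    {p : ENNReal} (hp : p ≠ ⊤) : MemLp (fun ω => f.eval (X ω)) p P := by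
  simp only [Polynomial.eval_eq_sum_range]
  exact memLp_finsetSum _ fun i _ => (memLp_pow_of_forall_memLp hX i p hp).const_mul _

end PolynomialMoments

section Hermite

open Polynomial (hermite aeval derivative)

lemma integrable_eval_gaussianReal (f : Polynomial ℝ) (μ : ℝ) (v : NNReal) :
    Integrable (fun x => f.eval x) (gaussianReal μ v) :=
  (memLp_eval_of_forall_memLp (X := id) (fun p hp => memLp_id_gaussianReal' p hp) f
    ENNReal.one_ne_top).integrable le_rfl

lemma hasDerivAt_neg_gaussianPDFReal (x : ℝ) :
    HasDerivAt (fun x => -gaussianPDFReal 0 1 x) (x * gaussianPDFReal 0 1 x) x := by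
  simp only [gaussianPDFReal_def]
  have hexponent :
      HasDerivAt (fun x : ℝ => -(x - 0) ^ 2 / (2 * ((1 : NNReal) : ℝ))) (-x) x := by
    refine ((((hasDerivAt_id x).sub_const 0).pow 2).neg.div_const _).congr_deriv ?_
    simp
    ring
  refine ((hexponent.exp.const_mul _).neg).congr_deriv ?_
  ring

lemma integral_mul_eval_gaussianReal (f : Polynomial ℝ) :
    ∫ x, x * f.eval x ∂(gaussianReal 0 1) = ∫ x, f.derivative.eval x ∂(gaussianReal 0 1) := by
  have hint (f : Polynomial ℝ) : Integrable fun x => f.eval x * gaussianPDFReal 0 1 x := by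
    have h := integrable_eval_gaussianReal f 0 1
    rw [gaussianReal_of_var_ne_zero _ one_ne_zero,
      integrable_withDensity_iff_integrable_smul' (measurable_gaussianPDF 0 1)
        (by simp [gaussianPDF_lt_top])] at h
    simpa only [toReal_gaussianPDF, smul_eq_mul, mul_comm] using h
  have hparts := integral_mul_deriv_eq_deriv_mul_of_integrable
    (fun x _ => f.hasDerivAt x) (fun x _ => hasDerivAt_neg_gaussianPDFReal x)
    ((hint (f * Polynomial.X)).congr (ae_of_all _ fun x => by simp [mul_assoc]))
    ((hint f.derivative).neg.congr (ae_of_all _ fun x => by simp))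
    ((hint f).neg.congr (ae_of_all _ fun x => by simp))
  simp only [integral_gaussianReal_eq_integral_smul one_ne_zero, smul_eq_mul]
  calc ∫ x, gaussianPDFReal 0 1 x * (x * f.eval x)
      = ∫ x, f.eval x * (x * gaussianPDFReal 0 1 x) := by congr 1 with x; ring
    _ = ∫ x, gaussianPDFReal 0 1 x * f.derivative.eval x := by
      rw [hparts, ← integral_neg]
      congr 1 with x
      ring

lemma integral_hermite_mul_eval_gaussianReal (n : ℕ) (f : Polynomial ℝ) :
    ∫ x, aeval x (hermite n) * f.eval x ∂(gaussianReal 0 1)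
      = ∫ x, (derivative^[n] f).eval x ∂(gaussianReal 0 1) := by
  induction n generalizing f with
  | zero => simp
  | succ n ih =>
    set h : Polynomial ℝ := (hermite n).map (algebraMap ℤ ℝ) with hh
    have heval (x : ℝ) : h.eval x = aeval x (hermite n) := Polynomial.eval_map_algebraMap _ x
    have hsucc (x : ℝ) : aeval x (hermite (n + 1)) * f.eval x
        = (Polynomial.X * (h * f)).eval x - (derivative h * f).eval x := by
      rw [hh, Polynomial.derivative_map]
      simp only [Polynomial.hermite_succ, map_sub, map_mul, Polynomial.aeval_X,
        Polynomial.eval_mul, Polynomial.eval_X, Polynomial.eval_map_algebraMap]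
      ring
    have hstein := integral_mul_eval_gaussianReal (h * f)
    have hint (f : Polynomial ℝ) := integrable_eval_gaussianReal f 0 1
    calc ∫ x, aeval x (hermite (n + 1)) * f.eval x ∂(gaussianReal 0 1)
        = ∫ x, (derivative (h * f)).eval x - (derivative h * f).eval x ∂(gaussianReal 0 1) := by
          simp only [hsucc]
          rw [integral_sub (hint _) (hint _), integral_sub (hint _) (hint _), ← hstein]
          simp only [Polynomial.eval_mul, Polynomial.eval_X]
      _ = ∫ x, aeval x (hermite n) * (derivative f).eval x ∂(gaussianReal 0 1) := by
          simp [heval]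
      _ = ∫ x, (derivative^[n + 1] f).eval x ∂(gaussianReal 0 1) := by
          rw [ih, Function.iterate_succ_apply]

lemma iterate_derivative_comp_C_add_C_mul_X (f : Polynomial ℝ) (a b : ℝ) (n : ℕ) :
    derivative^[n] (f.comp (Polynomial.C a + Polynomial.C b * Polynomial.X))
      = Polynomial.C (b ^ n) *
        (derivative^[n] f).comp (Polynomial.C a + Polynomial.C b * Polynomial.X) := by
  induction n with
  | zero => simp
  | succ n ih =>
    simp only [Function.iterate_succ_apply', ih, Polynomial.derivative_C_mul,
      Polynomial.derivative_comp, Polynomial.derivative_add, Polynomial.derivative_C,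
      Polynomial.derivative_X, pow_succ, Polynomial.C_mul]
    ring

lemma iterate_derivative_eq_C_factorial_of_monic {f : Polynomial ℝ} (hf : f.Monic) :
    derivative^[f.natDegree] f = Polynomial.C (f.natDegree.factorial : ℝ) := by
  rw [Polynomial.eq_C_of_natDegree_eq_zero (p := derivative^[f.natDegree] f)
    (Nat.le_zero.1 ((Polynomial.natDegree_iterate_derivative f _).trans (by simp))),
    Polynomial.coeff_iterate_derivative]
  simp [Nat.descFactorial_self, hf]

variable {Ω : Type*} [MeasurableSpace Ω] {P : Measure Ω} {X Y : Ω → ℝ}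

lemma hasGaussianLaw_prodMk_sub_const_mul (hXY : HasGaussianLaw (fun ω => (X ω, Y ω)) P) (c : ℝ) :
    HasGaussianLaw (fun ω => (X ω, Y ω - c * X ω)) P :=
  hXY.map_fun ((ContinuousLinearMap.fst ℝ ℝ ℝ).prod
    (ContinuousLinearMap.snd ℝ ℝ ℝ - c • ContinuousLinearMap.fst ℝ ℝ ℝ))

lemma indepFun_sub_covariance_mul (hXY : HasGaussianLaw (fun ω => (X ω, Y ω)) P)
    (hX : Var[X; P] = 1) : IndepFun X (fun ω => Y ω - cov[X, Y; P] * X ω) P := by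
  have := hXY.isProbabilityMeasure
  refine (hasGaussianLaw_prodMk_sub_const_mul hXY _).indepFun_of_covariance_eq_zero ?_
  have hX2 := hXY.fst.memLp_two
  rw [covariance_fun_sub_right hX2 hXY.snd.memLp_two (hX2.const_mul _),
    covariance_const_mul_right, covariance_self hXY.fst.aemeasurable, hX, mul_one, sub_self]

lemma exists_integral_eval_mul_eval_eq (hXY : HasGaussianLaw (fun ω => (X ω, Y ω)) P)
    (hX : HasLaw X (gaussianReal 0 1) P) :
    ∃ ν : Measure ℝ, ∀ f g : Polynomial ℝ, ∫ ω, f.eval (X ω) * g.eval (Y ω) ∂P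
      = ∫ z, ∫ x, f.eval x * g.eval (z + cov[X, Y; P] * x) ∂(gaussianReal 0 1) ∂ν := by
  have := hXY.isProbabilityMeasure
  set ρ := cov[X, Y; P]
  set Z : Ω → ℝ := fun ω => Y ω - ρ * X ω with hZ
  have hXZ : HasGaussianLaw (fun ω => (X ω, Z ω)) P := hasGaussianLaw_prodMk_sub_const_mul hXY ρ
  have hlaw : P.map (fun ω => (X ω, Z ω)) = (gaussianReal 0 1).prod (P.map Z) := by
    rw [(indepFun_iff_map_prod_eq_prod_map_map hX.aemeasurable hXZ.snd.aemeasurable).1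
      (indepFun_sub_covariance_mul hXY (hX.variance_eq.trans (by simp))), hX.map_eq]
  have : IsProbabilityMeasure (P.map Z) := Measure.isProbabilityMeasure_map hXZ.snd.aemeasurable
  refine ⟨P.map Z, fun f g => ?_⟩
  have hcont : Continuous fun w : ℝ × ℝ => f.eval w.1 * g.eval (w.2 + ρ * w.1) := by fun_prop
  have hint : Integrable (fun w : ℝ × ℝ => f.eval w.1 * g.eval (w.2 + ρ * w.1))
      (P.map fun ω => (X ω, Z ω)) := by
    rw [integrable_map_measure hcont.aestronglyMeasurable hXZ.aemeasurable]
    have hf := memLp_eval_of_forall_memLp (p := 2) (fun p hp => hXY.fst.memLp hp) f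
      ENNReal.ofNat_ne_top
    have hg := memLp_eval_of_forall_memLp (p := 2) (fun p hp => hXY.snd.memLp hp) g
      ENNReal.ofNat_ne_top
    simpa [hZ, Function.comp_def, Pi.mul_def] using hf.integrable_mul hg
  calc ∫ ω, f.eval (X ω) * g.eval (Y ω) ∂P
      = ∫ w, f.eval w.1 * g.eval (w.2 + ρ * w.1) ∂(P.map fun ω => (X ω, Z ω)) := by
        rw [integral_map hXZ.aemeasurable hcont.aestronglyMeasurable]
        simp [hZ]
    _ = _ := by
        rw [hlaw] at hint ⊢
        rw [integral_prod_symm _ hint]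

lemma integral_hermite_mul_eval (hXY : HasGaussianLaw (fun ω => (X ω, Y ω)) P)
    (hX : HasLaw X (gaussianReal 0 1) P) (n : ℕ) (f : Polynomial ℝ) :
    ∫ ω, aeval (X ω) (hermite n) * f.eval (Y ω) ∂P
      = cov[X, Y; P] ^ n * ∫ ω, (derivative^[n] f).eval (Y ω) ∂P := by
  obtain ⟨ν, hν⟩ := exists_integral_eval_mul_eval_eq hXY hX
  have hleft := hν ((hermite n).map (algebraMap ℤ ℝ)) f
  have hright := hν 1 (derivative^[n] f)
  simp only [Polynomial.eval_map_algebraMap, Polynomial.eval_one, one_mul] at hleft hright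
  rw [hleft, hright, ← integral_const_mul]
  congr 1 with z
  rw [← integral_const_mul]
  have h := integral_hermite_mul_eval_gaussianReal n
    (f.comp (Polynomial.C z + Polynomial.C cov[X, Y; P] * Polynomial.X))
  rw [iterate_derivative_comp_C_add_C_mul_X] at h
  simpa using h

theorem integral_hermite_mul_hermite (hXY : HasGaussianLaw (fun ω => (X ω, Y ω)) P)
    (hX : HasLaw X (gaussianReal 0 1) P) (n : ℕ) :
    ∫ ω, aeval (X ω) (hermite n) * aeval (Y ω) (hermite n) ∂P
      = n.factorial * cov[X, Y; P] ^ n := by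
  have := hXY.isProbabilityMeasure
  have hderiv := iterate_derivative_eq_C_factorial_of_monic
    ((Polynomial.hermite_monic n).map (algebraMap ℤ ℝ))
  rw [(Polynomial.hermite_monic n).natDegree_map, Polynomial.natDegree_hermite] at hderiv
  have h := integral_hermite_mul_eval hXY hX n ((hermite n).map (algebraMap ℤ ℝ))
  simp only [Polynomial.eval_map_algebraMap, hderiv, Polynomial.eval_C] at h
  simpa [mul_comm] using h

end Hermite

/-! ### Anticoncentration of Gaussian polynomials -/

lemma exists_norm_eval_le_of_natDegree_lt_card {ι 𝕜 : Type*} [NormedField 𝕜] (s : Finset ι)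
    {v : ι → 𝕜} (hv : Set.InjOn v s) (t : 𝕜) :
    ∃ C > 0, ∀ J ⊆ s, ∀ R : Polynomial 𝕜, R.natDegree < J.card → ∀ δ : ℝ,
      (∀ j ∈ J, ‖R.eval (v j)‖ ≤ δ) → ‖R.eval t‖ ≤ C * δ := by
  classical
  let w (J : Finset ι) : ℝ := ∑ j ∈ J, ‖(Lagrange.basis J v j).eval t‖
  have hw (J : Finset ι) : 0 ≤ w J := Finset.sum_nonneg fun j _ => norm_nonneg _
  refine ⟨1 + ∑ J ∈ s.powerset, w J,
    add_pos_of_pos_of_nonneg one_pos (Finset.sum_nonneg fun J _ => hw J), ?_⟩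
  intro J hJ R hR δ hδ
  obtain ⟨j₀, hj₀⟩ := Finset.card_pos.1 (R.natDegree.zero_le.trans_lt hR)
  have hδ0 : 0 ≤ δ := (norm_nonneg _).trans (hδ j₀ hj₀)
  have hinterp : R = Lagrange.interpolate J v fun j => R.eval (v j) :=
    Lagrange.eq_interpolate (hv.mono (Finset.coe_subset.2 hJ))
      (Polynomial.degree_le_natDegree.trans_lt (by exact_mod_cast hR))
  calc ‖R.eval t‖ = ‖∑ j ∈ J, R.eval (v j) * (Lagrange.basis J v j).eval t‖ := by
        conv_lhs => rw [hinterp, Lagrange.interpolate_apply]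
        simp [Polynomial.eval_finsetSum]
    _ ≤ ∑ j ∈ J, δ * ‖(Lagrange.basis J v j).eval t‖ := norm_sum_le_of_le _ fun j hj => by
        rw [norm_mul]
        gcongr
        exact hδ j hj
    _ = w J * δ := by rw [← Finset.mul_sum, mul_comm]
    _ ≤ (1 + ∑ J ∈ s.powerset, w J) * δ := by
        gcongr
        exact (Finset.single_le_sum (fun J _ => hw J) (Finset.mem_powerset.2 hJ)).trans
          (le_add_of_nonneg_left zero_le_one)

lemma cos_two_mul_arctan (s : ℝ) : cos (2 * arctan s) = (1 - s ^ 2) / (1 + s ^ 2) := by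
  rw [cos_two_mul, cos_sq_arctan]
  field_simp
  ring

lemma sin_two_mul_arctan (s : ℝ) : sin (2 * arctan s) = 2 * s / (1 + s ^ 2) := by
  have hsqrt : √(1 + s ^ 2) * √(1 + s ^ 2) = 1 + s ^ 2 := mul_self_sqrt (by positivity)
  rw [sin_two_mul, sin_arctan, cos_arctan, mul_assoc, div_mul_div_comm, hsqrt]
  ring

lemma exists_polynomial_eval_circle {σ : Type*} {f : MvPolynomial σ ℝ} {q : ℕ}
    (hf : f.totalDegree ≤ q) (x y : σ → ℝ) :
    ∃ R : Polynomial ℝ, R.natDegree ≤ 2 * q ∧ ∀ s : ℝ, R.eval s = (1 + s ^ 2) ^ q *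
      MvPolynomial.eval (cos (2 * arctan s) • x + sin (2 * arctan s) • y) f := by
  open Polynomial in
  have hdeg {c : σ →₀ ℕ} (hc : c ∈ f.support) : ∑ i ∈ c.support, c i ≤ q :=
    (MvPolynomial.le_totalDegree hc).trans hf
  refine ⟨∑ c ∈ f.support, C (f.coeff c) *
    (∏ i ∈ c.support, (C (x i) * (1 - X ^ 2) + C (y i) * (2 * X)) ^ c i) *
      (1 + X ^ 2) ^ (q - ∑ i ∈ c.support, c i),
    natDegree_sum_le_of_forall_le _ _ fun c hc => ?_, fun s => ?_⟩
  · have hlin (i : σ) : (C (x i) * (1 - X ^ 2) + C (y i) * (2 * X) : ℝ[X]).natDegree ≤ 2 := by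
      compute_degree
    have hquad : (1 + X ^ 2 : ℝ[X]).natDegree ≤ 2 := by compute_degree
    have hprod : (∏ i ∈ c.support,
        (C (x i) * (1 - X ^ 2) + C (y i) * (2 * X)) ^ c i : ℝ[X]).natDegree
          ≤ ∑ i ∈ c.support, c i * 2 :=
      (natDegree_prod_le _ _).trans (Finset.sum_le_sum fun i _ => natDegree_pow_le_of_le _ (hlin i))
    refine (natDegree_mul_le_of_le (natDegree_mul_le_of_le (natDegree_C _).le hprod)
      (natDegree_pow_le_of_le _ hquad)).trans ?_
    rw [← Finset.sum_mul]
    have := hdeg hc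
    lia
  · have hs : 1 + s ^ 2 ≠ 0 := by positivity
    have hlin (i : σ) : x i * (1 - s ^ 2) + y i * (2 * s)
        = (1 + s ^ 2) * (cos (2 * arctan s) * x i + sin (2 * arctan s) * y i) := by
      rw [cos_two_mul_arctan, sin_two_mul_arctan]
      field_simp
    rw [eval_finsetSum, MvPolynomial.eval_eq, Finset.mul_sum]
    refine Finset.sum_congr rfl fun c hc => ?_
    simp only [eval_mul, eval_C, eval_prod, eval_pow, eval_add, eval_sub, eval_one, eval_X,
      eval_ofNat, hlin, mul_pow, Finset.prod_mul_distrib, Finset.prod_pow_eq_pow_sum,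
      Pi.add_apply, Pi.smul_apply, smul_eq_mul]
    rw [← Nat.add_sub_cancel' (hdeg hc), pow_add, Nat.add_sub_cancel_left]
    ring

lemma exists_abs_eval_circle_le (q N : ℕ) (t : ℝ) :
    ∃ C > 0, ∀ {σ : Type*} {f : MvPolynomial σ ℝ}, f.totalDegree ≤ q → ∀ x y : σ → ℝ,
      ∀ J ⊆ Finset.range N, 2 * q < J.card → ∀ δ : ℝ,
      (∀ j ∈ J, |MvPolynomial.eval (cos (2 * arctan j) • x + sin (2 * arctan j) • y) f| ≤ δ) →
      |MvPolynomial.eval (cos (2 * arctan t) • x + sin (2 * arctan t) • y) f| ≤ C * δ := by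
  obtain ⟨C, hC, hlagrange⟩ := exists_norm_eval_le_of_natDegree_lt_card (Finset.range N)
    (v := fun j : ℕ => (j : ℝ)) Nat.cast_injective.injOn t
  refine ⟨C * (1 + (N : ℝ) ^ 2) ^ q, by positivity, fun {σ f} hf x y J hJ hcard δ hδ => ?_⟩
  obtain ⟨R, hRdeg, hR⟩ := exists_polynomial_eval_circle hf x y
  have hnode : ∀ j ∈ J, ‖R.eval (j : ℝ)‖ ≤ (1 + (N : ℝ) ^ 2) ^ q * δ := fun j hj => by
    have hjN : (j : ℝ) ≤ N := by exact_mod_cast (Finset.mem_range.1 (hJ hj)).le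
    rw [hR, norm_mul, norm_of_nonneg (by positivity)]
    gcongr
    exact hδ j hj
  calc |MvPolynomial.eval (cos (2 * arctan t) • x + sin (2 * arctan t) • y) f|
      ≤ (1 + t ^ 2) ^ q * |MvPolynomial.eval (cos (2 * arctan t) • x + sin (2 * arctan t) • y) f| :=
        le_mul_of_one_le_left (abs_nonneg _) (one_le_pow₀ (le_add_of_nonneg_right (sq_nonneg t)))
    _ = ‖R.eval t‖ := by rw [hR, norm_mul, norm_of_nonneg (by positivity), norm_eq_abs]
    _ ≤ C * ((1 + (N : ℝ) ^ 2) ^ q * δ) := hlagrange J hJ R (hRdeg.trans_lt hcard) _ hnode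
    _ = C * (1 + (N : ℝ) ^ 2) ^ q * δ := by ring

lemma sum_measureReal_le_add_card_mul {α ι : Type*} [MeasurableSpace α] {μ : Measure α}
    [IsProbabilityMeasure μ] {s : Finset ι} {A : ι → Set α} {D : Set α} {k : ℕ}
    (hA : ∀ j ∈ s, MeasurableSet (A j)) (hD : MeasurableSet D)
    (hAD : ∀ J ⊆ s, k < J.card → ⋂ j ∈ J, A j ⊆ D) :
    ∑ j ∈ s, μ.real (A j) ≤ k + s.card * μ.real D := by
  classical
  have hint {S : Set α} (hS : MeasurableSet S) : Integrable (S.indicator (1 : α → ℝ)) μ :=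
    (integrable_const 1).indicator hS
  have hcount (w : α) : ∑ j ∈ s, (A j).indicator (1 : α → ℝ) w
      ≤ k + s.card * D.indicator (1 : α → ℝ) w := by
    set J := s.filter (w ∈ A ·) with hJ
    have hJs : J.card ≤ s.card := Finset.card_filter_le _ _
    have hsum : ∑ j ∈ s, (A j).indicator (1 : α → ℝ) w = J.card := by
      simp [hJ, Set.indicator_apply, Finset.sum_boole]
    rw [hsum]
    by_cases hcard : k < J.card
    · have hwD : w ∈ D := hAD J (Finset.filter_subset _ _) hcard (by simp [hJ])
      simp only [Set.indicator_of_mem hwD, Pi.one_apply, mul_one]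
      exact_mod_cast hJs.trans (Nat.le_add_left _ _)
    · have : 0 ≤ D.indicator (1 : α → ℝ) w := Set.indicator_nonneg (fun _ _ => zero_le_one) w
      exact (Nat.cast_le.2 (not_lt.1 hcard)).trans (le_add_of_nonneg_right (by positivity))
  calc ∑ j ∈ s, μ.real (A j) = ∫ w, ∑ j ∈ s, (A j).indicator (1 : α → ℝ) w ∂μ := by
        rw [integral_finsetSum _ fun j hj => hint (hA j hj)]
        exact Finset.sum_congr rfl fun j hj => (integral_indicator_one (hA j hj)).symm
    _ ≤ ∫ w, (k + s.card * D.indicator (1 : α → ℝ) w) ∂μ :=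
        integral_mono (integrable_finsetSum _ fun j hj => hint (hA j hj))
          ((integrable_const _).add ((hint hD).const_mul _)) hcount
    _ = k + s.card * μ.real D := by
        rw [integral_add (integrable_const _) ((hint hD).const_mul _), integral_const_mul,
          integral_indicator_one hD]
        simp

-- Of `N` rotations of two independent copies, more than `2 q` are small only if both copies are.
lemma exists_mul_measureReal_abs_eval_le (q N : ℕ) :
    ∃ C > 0, ∀ {m : ℕ} (μ : Measure (Fin m → ℝ)) [IsGaussian μ], μ[id] = 0 →
      ∀ {f : MvPolynomial (Fin m) ℝ}, f.totalDegree ≤ q → ∀ δ : ℝ,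
      N * μ.real {x | |MvPolynomial.eval x f| ≤ δ}
        ≤ 2 * q + N * μ.real {x | |MvPolynomial.eval x f| ≤ C * δ} ^ 2 := by
  obtain ⟨C₀, hC₀, h₀⟩ := exists_abs_eval_circle_le q N 0
  obtain ⟨C₁, _, h₁⟩ := exists_abs_eval_circle_le q N 1
  refine ⟨max C₀ C₁, lt_max_of_lt_left hC₀, fun {m} μ _ hμ f hf δ => ?_⟩
  have hcont := MvPolynomial.continuous_eval f
  have hS (r : ℝ) : MeasurableSet {x | |MvPolynomial.eval x f| ≤ r} :=
    measurableSet_le hcont.measurable.abs measurable_const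
  set D := {x | |MvPolynomial.eval x f| ≤ max C₀ C₁ * δ}
  let A (j : ℕ) : Set ((Fin m → ℝ) × (Fin m → ℝ)) :=
    ContinuousLinearMap.rotation (2 * arctan j) ⁻¹' ({x | |MvPolynomial.eval x f| ≤ δ} ×ˢ Set.univ)
  have hA (j : ℕ) : (μ.prod μ).real (A j) = μ.real {x | |MvPolynomial.eval x f| ≤ δ} := by
    rw [← map_measureReal_apply (by fun_prop) ((hS δ).prod .univ),
      IsGaussian.map_rotation_eq_self hμ, measureReal_prod_prod, probReal_univ, mul_one]
  have hAD : ∀ J ⊆ Finset.range N, 2 * q < J.card → ⋂ j ∈ J, A j ⊆ D ×ˢ D := by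
    intro J hJ hcard w hw
    have hsmall : ∀ j ∈ J, |MvPolynomial.eval
        (cos (2 * arctan j) • w.1 + sin (2 * arctan j) • w.2) f| ≤ δ := fun j hj => by
      simpa [A, ContinuousLinearMap.rotation_apply] using Set.mem_iInter₂.1 hw j hj
    have hδ : 0 ≤ δ := by
      obtain ⟨j, hj⟩ := Finset.card_pos.1 (Nat.zero_lt_of_lt hcard)
      exact (abs_nonneg _).trans (hsmall j hj)
    have hπ : 2 * (π / 4) = π / 2 := by ring
    constructor
    · refine le_trans ?_ (mul_le_mul_of_nonneg_right (le_max_left C₀ C₁) hδ)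
      simpa using h₀ hf w.1 w.2 J hJ hcard δ hsmall
    · refine le_trans ?_ (mul_le_mul_of_nonneg_right (le_max_right C₀ C₁) hδ)
      simpa [hπ] using h₁ hf w.1 w.2 J hJ hcard δ hsmall
  simpa [hA, measureReal_prod_prod, sq] using
    sum_measureReal_le_add_card_mul (μ := μ.prod μ) (s := Finset.range N) (A := A)
      (fun j _ => ((hS δ).prod .univ).preimage (by fun_prop)) ((hS _).prod (hS _)) hAD

lemma exists_mem_lt_of_sq_lt_mem {S : Set ℝ} (hS0 : ∀ u ∈ S, 0 ≤ u) (hS1 : ∃ u ∈ S, u < 1)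
    (hsq : ∀ u ∈ S, ∀ v, u ^ 2 < v → v ∈ S) {η : ℝ} (hη : 0 < η) : ∃ u ∈ S, u < η := by
  obtain ⟨u₁, hu₁, hu₁1⟩ := hS1
  obtain ⟨w, hu₁w, hw1⟩ := exists_between hu₁1
  have hw0 : 0 < w := (hS0 u₁ hu₁).trans_lt hu₁w
  have hpow (k : ℕ) : ∃ u ∈ S, u < w ^ (k + 1) := by
    induction k with
    | zero => exact ⟨u₁, hu₁, by simpa using hu₁w⟩
    | succ k ih =>
      obtain ⟨u, hu, huw⟩ := ih
      have hlt : u ^ 2 < w ^ (k + 1 + 1) :=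
        calc u ^ 2 < (w ^ (k + 1)) ^ 2 := pow_lt_pow_left₀ huw (hS0 u hu) two_ne_zero
          _ = w ^ ((k + 1) * 2) := (pow_mul _ _ _).symm
          _ ≤ w ^ (k + 1 + 1) := pow_le_pow_of_le_one hw0.le hw1.le (by lia)
      obtain ⟨v, huv, hvw⟩ := exists_between hlt
      exact ⟨v, hsq u hu v huv, hvw⟩
  obtain ⟨k, hk⟩ := exists_pow_lt_of_lt_one hη hw1
  obtain ⟨u, hu, huw⟩ := hpow k
  exact ⟨u, hu, huw.trans ((pow_le_pow_of_le_one hw0.le hw1.le k.le_succ).trans_lt hk)⟩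

/-- `Z` is a polynomial of degree at most `q` in the coordinates of a centred Gaussian vector of
some finite dimension. -/
def IsGaussianPolynomial {Ω : Type*} [MeasurableSpace Ω] (Z : Ω → ℝ) (q : ℕ) (P : Measure Ω) :
    Prop :=
  ∃ (m : ℕ) (X : Ω → Fin m → ℝ) (f : MvPolynomial (Fin m) ℝ),
    HasGaussianLaw X P ∧ P[X] = 0 ∧ f.totalDegree ≤ q ∧ ∀ ω, Z ω = MvPolynomial.eval (X ω) f

section Anticoncentration

variable {Ω : Type*} [MeasurableSpace Ω] {P : Measure Ω} {q : ℕ}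

lemma IsGaussianPolynomial.const_mul {Z : Ω → ℝ} (hZ : IsGaussianPolynomial Z q P) (c : ℝ) :
    IsGaussianPolynomial (fun ω => c * Z ω) q P := by
  obtain ⟨m, X, f, hX, hX0, hf, hZ⟩ := hZ
  exact ⟨m, X, c • f, hX, hX0, (MvPolynomial.totalDegree_smul_le c f).trans hf,
    fun ω => by simp [hZ]⟩

lemma exists_mul_measureReal_abs_le (P : Measure Ω) (q N : ℕ) :
    ∃ C > 0, ∀ Z : Ω → ℝ, IsGaussianPolynomial Z q P → ∀ δ : ℝ,
      N * P.real {ω | |Z ω| ≤ δ} ≤ 2 * q + N * P.real {ω | |Z ω| ≤ C * δ} ^ 2 := by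
  obtain ⟨C, hC, hstep⟩ := exists_mul_measureReal_abs_eval_le q N
  refine ⟨C, hC, ?_⟩
  rintro Z ⟨m, X, f, hX, hX0, hf, hZ⟩ δ
  have : IsGaussian (P.map X) := hX.isGaussian_map
  have hmean : (P.map X)[id] = 0 := by
    rw [integral_map hX.aemeasurable aestronglyMeasurable_id]
    exact hX0
  have hlaw (r : ℝ) :
      (P.map X).real {x | |MvPolynomial.eval x f| ≤ r} = P.real {ω | |Z ω| ≤ r} := by
    rw [map_measureReal_apply_of_aemeasurable hX.aemeasurable (measurableSet_le
      (MvPolynomial.continuous_eval f).measurable.abs measurable_const)]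
    simp only [hZ, Set.preimage_ofPred_eq]
  simpa only [hlaw] using hstep (P.map X) hmean hf δ

theorem exists_forall_measureReal_abs_le {ι : Type*} {Z : ι → Ω → ℝ}
    (hZ : ∀ i, IsGaussianPolynomial (Z i) q P)
    (hstart : ∃ u < 1, ∃ δ > 0, ∀ i, P.real {ω | |Z i ω| ≤ δ} ≤ u) {η : ℝ} (hη : 0 < η) :
    ∃ δ > 0, ∀ i, P.real {ω | |Z i ω| ≤ δ} ≤ η := by
  obtain _ | ⟨⟨i₀⟩⟩ := isEmpty_or_nonempty ι
  · exact ⟨1, one_pos, isEmptyElim⟩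
  let S : Set ℝ := {u | ∃ δ > 0, ∀ i, P.real {ω | |Z i ω| ≤ δ} ≤ u}
  have hS0 : ∀ u ∈ S, 0 ≤ u := fun u ⟨δ, _, hu⟩ => measureReal_nonneg.trans (hu i₀)
  have hS1 : ∃ u ∈ S, u < 1 := by
    obtain ⟨u, hu1, hu⟩ := hstart
    exact ⟨u, hu, hu1⟩
  have hsq : ∀ u ∈ S, ∀ v, u ^ 2 < v → v ∈ S := by
    rintro u ⟨δ, hδ, hu⟩ v huv
    obtain ⟨N, hN⟩ := exists_nat_gt (2 * q / (v - u ^ 2))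
    have huv' : 0 < v - u ^ 2 := sub_pos.2 huv
    have hN0 : (0 : ℝ) < N := (by positivity : 0 ≤ 2 * q / (v - u ^ 2)).trans_lt hN
    obtain ⟨C, hC, hstep⟩ := exists_mul_measureReal_abs_le P q N
    refine ⟨δ / C, by positivity, fun i => le_of_mul_le_mul_left ?_ hN0⟩
    calc N * P.real {ω | |Z i ω| ≤ δ / C}
        ≤ 2 * q + N * P.real {ω | |Z i ω| ≤ C * (δ / C)} ^ 2 := hstep (Z i) (hZ i) _
      _ ≤ 2 * q + N * u ^ 2 := by
          rw [mul_div_cancel₀ _ hC.ne']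
          gcongr
          exact hu i
      _ ≤ N * v := by linarith [(div_lt_iff₀ huv').1 hN]
  obtain ⟨u, ⟨δ, hδ, hu⟩, huη⟩ := exists_mem_lt_of_sq_lt_mem hS0 hS1 hsq hη
  exact ⟨δ, hδ, fun i => (hu i).trans huη.le⟩

lemma exists_pos_forall_setIntegral_lt [IsFiniteMeasure P] {f : Ω → ℝ} (hf : Integrable f P)
    {η : ℝ} (hη : 0 < η) : ∃ κ > 0, ∀ A, P.real A < κ → ∫ ω in A, f ω ∂P < η := by
  have hmeas : Tendsto (P ∘ id) (comap P.real (𝓝 0)) (𝓝 0) := by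
    simpa [Function.comp_def] using
      ENNReal.tendsto_ofReal (tendsto_comap (f := P.real) (x := 𝓝 0))
  obtain ⟨κ, hκ, hsmall⟩ := ((Metric.nhds_basis_ball.comap P.real).eventually_iff).1
    ((hf.tendsto_setIntegral_nhds_zero hmeas).eventually_lt_const hη)
  refine ⟨κ, hκ, fun A hA => hsmall ?_⟩
  simpa [abs_of_nonneg measureReal_nonneg] using hA

lemma integral_mul_le_add_setIntegral_sq [IsFiniteMeasure P] {V Y : Ω → ℝ} (hVm : Measurable V)
    (hV : MemLp V 2 P) (hY : MemLp Y 2 P) {l δ : ℝ} (hl : 0 < l) (hδ : 0 ≤ δ) :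
    ∫ ω, V ω * Y ω ∂P ≤ δ * ∫ ω, |Y ω| ∂P + l * ∫ ω, V ω ^ 2 ∂P
      + ∫ ω in {ω | δ < |V ω|}, Y ω ^ 2 / (4 * l) ∂P := by
  set A : Set Ω := {ω | δ < |V ω|}
  have hAm : MeasurableSet A := measurableSet_lt measurable_const hVm.abs
  have hpointwise (ω : Ω) : V ω * Y ω ≤ δ * |Y ω| + l * V ω ^ 2
      + A.indicator (fun ω => Y ω ^ 2 / (4 * l)) ω := by
    by_cases hω : ω ∈ A
    · have hsq : l * V ω ^ 2 + Y ω ^ 2 / (4 * l) - V ω * Y ω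
          = (2 * l * V ω - Y ω) ^ 2 / (4 * l) := by field_simp; ring
      have hnonneg : 0 ≤ (2 * l * V ω - Y ω) ^ 2 / (4 * l) := by positivity
      rw [Set.indicator_of_mem hω]
      linarith [mul_nonneg hδ (abs_nonneg (Y ω))]
    · have hVY : V ω * Y ω ≤ δ * |Y ω| :=
        calc V ω * Y ω ≤ |V ω| * |Y ω| := (le_abs_self _).trans (abs_mul _ _).le
          _ ≤ δ * |Y ω| := by gcongr; exact not_lt.1 hω
      rw [Set.indicator_of_notMem hω]
      linarith [mul_nonneg hl.le (sq_nonneg (V ω))]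
  have hYi : Integrable (fun ω => δ * |Y ω|) P := (hY.integrable (by norm_num)).abs.const_mul δ
  have hVi : Integrable (fun ω => l * V ω ^ 2) P := hV.integrable_sq.const_mul l
  have hAi : Integrable (A.indicator fun ω => Y ω ^ 2 / (4 * l)) P :=
    (hY.integrable_sq.div_const _).indicator hAm
  refine (integral_mono (hV.integrable_mul hY) ((hYi.add hVi).add hAi) hpointwise).trans_eq ?_
  rw [integral_add' (hYi.add hVi) hAi, integral_add' hYi hVi, integral_const_mul,
    integral_const_mul, integral_indicator hAm]

lemma exists_le_measureReal_lt_abs [IsFiniteMeasure P] {Y : Ω → ℝ} (hY : MemLp Y 2 P) {c C : ℝ}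
    (hc : 0 < c) (hC : 0 < C) :
    ∃ δ > 0, ∃ κ > 0, ∀ V : Ω → ℝ, Measurable V → MemLp V 2 P → ∫ ω, V ω ^ 2 ∂P ≤ C →
      c ≤ ∫ ω, V ω * Y ω ∂P → κ ≤ P.real {ω | δ < |V ω|} := by
  have : 0 ≤ ∫ ω, |Y ω| ∂P := integral_nonneg fun ω => abs_nonneg _
  set l := c / (4 * C) with hl
  set δ := c / (4 * (∫ ω, |Y ω| ∂P + 1)) with hδ
  obtain ⟨κ, hκ, hsmall⟩ := exists_pos_forall_setIntegral_lt
    (hY.integrable_sq.div_const (4 * l)) (half_pos hc)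
  refine ⟨δ, by positivity, κ, hκ, fun V hVm hV hV2 hVY => not_lt.1 fun hlt => hVY.not_gt ?_⟩
  calc ∫ ω, V ω * Y ω ∂P
      ≤ δ * ∫ ω, |Y ω| ∂P + l * ∫ ω, V ω ^ 2 ∂P
        + ∫ ω in {ω | δ < |V ω|}, Y ω ^ 2 / (4 * l) ∂P :=
        integral_mul_le_add_setIntegral_sq hVm hV hY (by positivity) (by positivity)
    _ < δ * (∫ ω, |Y ω| ∂P + 1) + l * C + c / 2 := by
        refine add_lt_add_of_le_of_lt ?_ (hsmall _ hlt)
        gcongr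
        exact le_add_of_nonneg_right zero_le_one
    _ = c := by
        rw [hl, hδ]
        field_simp
        ring

theorem exists_forall_measureReal_abs_le_of_integral_mul [IsProbabilityMeasure P] {ι : Type*}
    {Z : ι → Ω → ℝ} {Y : Ω → ℝ} {c C : ℝ} (hZ : ∀ i, IsGaussianPolynomial (Z i) q P)
    (hZm : ∀ i, Measurable (Z i)) (hZ2 : ∀ i, MemLp (Z i) 2 P)
    (hZC : ∀ i, ∫ ω, Z i ω ^ 2 ∂P ≤ C) (hC : 0 < C) (hY : MemLp Y 2 P)
    (hZY : ∀ i, c ≤ ∫ ω, Z i ω * Y ω ∂P) (hc : 0 < c) {η : ℝ} (hη : 0 < η) :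
    ∃ δ > 0, ∀ i, P.real {ω | |Z i ω| ≤ δ} ≤ η := by
  obtain ⟨δ, hδ, κ, hκ, hlarge⟩ := exists_le_measureReal_lt_abs hY hc hC
  refine exists_forall_measureReal_abs_le hZ
    ⟨1 - κ, sub_lt_self 1 hκ, δ, hδ, fun i => ?_⟩ hη
  have hcompl : {ω | |Z i ω| ≤ δ} = {ω | δ < |Z i ω|}ᶜ := by ext ω; simp
  rw [hcompl, probReal_compl_eq_one_sub (measurableSet_lt measurable_const (hZm i).abs)]
  linarith [hlarge (Z i) (hZm i) (hZ2 i) (hZC i) (hZY i)]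

end Anticoncentration

/-! ### Hermite variations of fractional Brownian motion -/

section FractionalGaussianNoise

/-- The correlation at lag `x` of fractional Gaussian noise, that is of the unit-length increments
of a fractional Brownian motion with Hurst parameter `H`. -/
noncomputable def fgnCorrelation (H x : ℝ) : ℝ :=
  (|x + 1| ^ (2 * H) + |x - 1| ^ (2 * H) - 2 * |x| ^ (2 * H)) / 2

variable {H : ℝ}

lemma fgnCorrelation_neg (H x : ℝ) : fgnCorrelation H (-x) = fgnCorrelation H x := by
  rw [fgnCorrelation, fgnCorrelation, abs_neg, neg_add_eq_sub, abs_sub_comm 1 x, ← neg_add',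
    abs_neg]
  ring

lemma fgnCorrelation_zero (hH : H ≠ 0) : fgnCorrelation H 0 = 1 := by
  simp [fgnCorrelation, zero_rpow (mul_ne_zero two_ne_zero hH)]

lemma fgnCorrelation_eq_rpow_mul {x : ℝ} (hx : 1 ≤ x) :
    fgnCorrelation H x =
      x ^ (2 * H) * (((1 + 1 / x) ^ (2 * H) + (1 - 1 / x) ^ (2 * H) - 2) / 2) := by
  have hx0 : 0 < x := one_pos.trans_le hx
  have h1 : 0 ≤ 1 - 1 / x := sub_nonneg.2 ((div_le_one hx0).2 hx)
  have hadd : x + 1 = x * (1 + 1 / x) := by field_simp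
  have hsub : x - 1 = x * (1 - 1 / x) := by field_simp
  rw [fgnCorrelation, abs_of_pos hx0, abs_of_pos (by positivity : 0 < x + 1),
    abs_of_nonneg (sub_nonneg.2 hx), hadd, hsub, mul_rpow hx0.le (by positivity),
    mul_rpow hx0.le h1]
  ring

lemma fgnCorrelation_nonneg (hH : 1 / 2 ≤ H) {x : ℝ} (hx : 1 ≤ x) : 0 ≤ fgnCorrelation H x := by
  have hx0 : 0 < x := one_pos.trans_le hx
  have hinv : 1 / x ≤ 1 := (div_le_one hx0).2 hx
  have hinv0 : 0 < 1 / x := by positivity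
  have hp : 1 ≤ 2 * H := by linarith
  have hadd := one_add_mul_self_le_rpow_one_add (s := 1 / x) (by linarith) hp
  have hsub := one_add_mul_self_le_rpow_one_add (s := -(1 / x)) (by linarith) hp
  rw [← sub_eq_add_neg] at hsub
  rw [fgnCorrelation_eq_rpow_mul hx]
  exact mul_nonneg (by positivity) (by linarith)

lemma fgnCorrelation_le_rpow (hH0 : 0 ≤ H) (hH1 : H ≤ 1) {x : ℝ} (hx : 1 ≤ x) :
    fgnCorrelation H x ≤ x ^ (2 * H - 2) := by
  have hx0 : 0 < x := one_pos.trans_le hx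
  have hinv : 1 / x ≤ 1 := (div_le_one hx0).2 hx
  have hinv0 : 0 < 1 / x := by positivity
  -- `(1 ± u)^(2H) = (1 ± 2u + u²)^H ≤ 1 + H (±2u + u²)`, and the terms `±2u` cancel in the sum.
  have bernoulli : ∀ u : ℝ, -1 ≤ u → (1 + u) ^ (2 * H) ≤ 1 + H * (2 * u + u ^ 2) := by
    intro u hu
    rw [rpow_mul (by linarith), rpow_two, (by ring : (1 + u) ^ 2 = 1 + (2 * u + u ^ 2))]
    exact rpow_one_add_le_one_add_mul_self (by nlinarith [sq_nonneg (1 + u)]) hH0 hH1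
  have hadd := bernoulli (1 / x) (by linarith)
  have hsub := bernoulli (-(1 / x)) (by linarith)
  rw [← sub_eq_add_neg] at hsub
  calc fgnCorrelation H x ≤ x ^ (2 * H) * (1 / x) ^ 2 := by
        rw [fgnCorrelation_eq_rpow_mul hx]
        gcongr
        nlinarith [mul_nonneg (sub_nonneg.2 hH1) (sq_nonneg (1 / x))]
    _ = x ^ (2 * H - 2) := by
        rw [rpow_sub hx0, rpow_two]
        field_simp

lemma fgnCorrelation_natCast_nonneg (hH : 1 / 2 ≤ H) (d : ℕ) : 0 ≤ fgnCorrelation H d := by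
  obtain rfl | hd := Nat.eq_zero_or_pos d
  · simp [fgnCorrelation_zero (by linarith : H ≠ 0)]
  · exact fgnCorrelation_nonneg hH (mod_cast hd)

lemma fgnCorrelation_natCast_le (hH0 : 1 / 2 ≤ H) (hH1 : H ≤ 1) (d : ℕ) :
    fgnCorrelation H d ≤ 2 * ((d : ℝ) + 1) ^ (2 * H - 2) := by
  obtain rfl | hd := Nat.eq_zero_or_pos d
  · simp [fgnCorrelation_zero (by linarith : H ≠ 0)]
  have hd1 : (1 : ℝ) ≤ d := mod_cast hd
  calc fgnCorrelation H d ≤ (d : ℝ) ^ (2 * H - 2) :=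
        fgnCorrelation_le_rpow (by linarith) hH1 hd1
    _ ≤ 2 * (2 ^ (2 * H - 2) * (d : ℝ) ^ (2 * H - 2)) := by
        have htwo : (2 : ℝ)⁻¹ ≤ 2 ^ (2 * H - 2) := by
          rw [← rpow_neg_one]
          exact rpow_le_rpow_of_exponent_le one_le_two (by linarith)
        rw [← mul_assoc]
        exact le_mul_of_one_le_left (by positivity) (by linarith)
    _ = 2 * (2 * (d : ℝ)) ^ (2 * H - 2) := by rw [mul_rpow two_pos.le (by positivity)]
    _ ≤ 2 * ((d : ℝ) + 1) ^ (2 * H - 2) := by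
        gcongr 2 * ?_
        exact rpow_le_rpow_of_nonpos (by positivity) (by linarith) (by linarith)

lemma sum_range_lag_le {w : ℝ → ℝ} (hw : ∀ x, w (-x) = w x) {b : ℕ → ℝ} (hb : ∀ d, 0 ≤ b d)
    (hwb : ∀ d : ℕ, w d ≤ b d) {m k : ℕ} (hk : k < m) :
    ∑ l ∈ Finset.range m, w ((l : ℝ) - k) ≤ 2 * ∑ d ∈ Finset.range m, b d := by
  obtain ⟨j, rfl⟩ := Nat.exists_eq_add_of_le hk.le
  have hmono : ∀ i ≤ k + j, ∑ d ∈ Finset.range i, b d ≤ ∑ d ∈ Finset.range (k + j), b d :=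
    fun i hi => Finset.sum_le_sum_of_subset_of_nonneg (Finset.range_mono hi) fun _ _ _ => hb _
  rw [Finset.sum_range_add, two_mul]
  gcongr ?_ + ?_
  · calc ∑ l ∈ Finset.range k, w ((l : ℝ) - k)
        = ∑ d ∈ Finset.range k, w (((k - 1 - d : ℕ) : ℝ) - k) := (Finset.sum_range_reflect _ _).symm
      _ ≤ ∑ d ∈ Finset.range k, b (d + 1) := by
          refine Finset.sum_le_sum fun d hd => ?_
          have hlag : ((k - 1 - d : ℕ) : ℝ) - k = -((d + 1 : ℕ) : ℝ) := by
            rw [Nat.sub_sub, Nat.add_comm, Nat.cast_sub (Finset.mem_range.1 hd)]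
            ring
          rw [hlag, hw]
          exact hwb _
      _ ≤ ∑ d ∈ Finset.range (k + 1), b d := by
          rw [Finset.sum_range_succ']
          exact le_add_of_nonneg_right (hb 0)
      _ ≤ ∑ d ∈ Finset.range (k + j), b d := hmono _ hk
  · refine (Finset.sum_le_sum fun d _ => ?_).trans (hmono j (Nat.le_add_left j k))
    rw [Nat.cast_add, add_sub_cancel_left]
    exact hwb d

lemma sum_range_fgnCorrelation_pow_le {q : ℕ} (hH0 : 1 / 2 ≤ H) (hH1 : H ≤ 1)
    (hqH : 2 * q * (1 - H) < 1) {m k : ℕ} (hk : k < m) :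
    ∑ l ∈ Finset.range m, fgnCorrelation H ((l : ℝ) - k) ^ q ≤
      2 * (2 ^ q * ((m : ℝ) ^ (1 - 2 * q * (1 - H)) / (1 - 2 * q * (1 - H)))) := by
  set p := 1 - 2 * q * (1 - H) with hp
  have hp0 : 0 < p := by linarith
  have hp1 : p ≤ 1 := by
    have : 0 ≤ 2 * (q : ℝ) * (1 - H) := mul_nonneg (by positivity) (by linarith)
    linarith
  have hpow : ∀ d : ℕ, fgnCorrelation H d ^ q ≤ 2 ^ q * ((d : ℝ) + 1) ^ (p - 1) := fun d =>
    calc fgnCorrelation H d ^ q ≤ (2 * ((d : ℝ) + 1) ^ (2 * H - 2)) ^ q :=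
          pow_le_pow_left₀ (fgnCorrelation_natCast_nonneg hH0 d)
            (fgnCorrelation_natCast_le hH0 hH1 d) q
      _ = 2 ^ q * ((d : ℝ) + 1) ^ (p - 1) := by
          rw [mul_pow, ← rpow_mul_natCast (by positivity), hp]
          ring_nf
  refine (sum_range_lag_le (w := fun x => fgnCorrelation H x ^ q)
    (fun x => by rw [fgnCorrelation_neg]) (fun d => by positivity) hpow hk).trans ?_
  rw [← Finset.mul_sum]
  gcongr
  simpa [zero_rpow hp0.ne'] using sum_rpow_sub_one_le le_rfl hp0.ne' hp1 (Or.inr hp0) m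

lemma rpow_sub_one_le_rpow_sub {x p : ℝ} (hx : 0 ≤ x) (hp : 1 ≤ p) :
    (x + 1) ^ (p - 1) ≤ (x + 1) ^ p - x ^ p := by
  have hsplit : ∀ {y : ℝ}, 0 ≤ y → y ^ p = y ^ (p - 1) * y := fun {y} hy => by
    rw [← rpow_add_one' hy (by linarith), sub_add_cancel]
  have hmono : x ^ (p - 1) ≤ (x + 1) ^ (p - 1) :=
    rpow_le_rpow hx (by linarith) (by linarith)
  rw [hsplit hx, hsplit (by positivity : 0 ≤ x + 1)]
  nlinarith

lemma rpow_sub_one_le_rpow_sub_add_rpow_sub {x y p : ℝ} (hx : 0 ≤ x) (hy : 0 ≤ y) (hp1 : 1 ≤ p)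
    (hp2 : p ≤ 2) :
    (x + y + 1) ^ (p - 1) ≤ ((x + 1) ^ p - x ^ p) + ((y + 1) ^ p - y ^ p) :=
  calc (x + y + 1) ^ (p - 1) ≤ ((x + 1) + (y + 1)) ^ (p - 1) :=
        rpow_le_rpow (by positivity) (by linarith) (by linarith)
    _ ≤ (x + 1) ^ (p - 1) + (y + 1) ^ (p - 1) :=
        rpow_add_le_add_rpow (by positivity) (by positivity) (by linarith) (by linarith)
    _ ≤ _ := add_le_add (rpow_sub_one_le_rpow_sub hx hp1) (rpow_sub_one_le_rpow_sub hy hp1)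

end FractionalGaussianNoise

lemma totalDegree_aeval_X_le {R σ : Type*} [CommSemiring R] [Nontrivial R] (f : Polynomial R)
    (i : σ) : (Polynomial.aeval (MvPolynomial.X i : MvPolynomial σ R) f).totalDegree ≤
      f.natDegree := by
  rw [Polynomial.aeval_eq_sum_range]
  refine MvPolynomial.totalDegree_finsetSum_le fun k hk => ?_
  refine (MvPolynomial.totalDegree_smul_le _ _).trans ?_
  rw [MvPolynomial.totalDegree_X_pow]
  exact Finset.mem_range_succ_iff.1 hk

lemma IsGaussianPolynomial.sum_eval {Ω : Type*} [MeasurableSpace Ω] {P : Measure Ω} {m : ℕ}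
    {X : Ω → Fin m → ℝ} (hX : HasGaussianLaw X P) (hX0 : P[X] = 0) (f : Polynomial ℝ) :
    IsGaussianPolynomial (fun ω => ∑ i, f.eval (X ω i)) f.natDegree P := by
  refine ⟨m, X, ∑ i, Polynomial.aeval (MvPolynomial.X i) f, hX, hX0,
    MvPolynomial.totalDegree_finsetSum_le fun i _ => totalDegree_aeval_X_le f i, fun ω => ?_⟩
  rw [map_sum]
  refine Finset.sum_congr rfl fun i _ => ?_
  rw [← MvPolynomial.coe_aeval_eq_eval, RingHom.coe_coe, ← Polynomial.aeval_algHom_apply,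
    MvPolynomial.aeval_X, Polynomial.coe_aeval_eq_eval]

namespace IsFractionalBrownianMotion

variable {Ω : Type*} [MeasureSpace Ω] {B : ℝ → Ω → ℝ} {H : ℝ}

lemma isGaussianProcess (hB : IsFractionalBrownianMotion B H) :
    IsGaussianProcess (fun t : NNReal => B t) (ℙ : Measure Ω) where
  hasGaussianLaw I := by
    refine ⟨isGaussian_of_map_eq_gaussianReal fun L => ?_⟩
    let e := I.equivFin.symm
    obtain ⟨v, hv⟩ := hB.gaussian_fdd I.card (fun i => ((e i : NNReal) : ℝ))
      (fun i => (e i : NNReal).2) (fun i => L (Pi.single (e i) 1))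
    refine ⟨0, v, ?_⟩
    have hI : Measurable fun ω => I.restrict fun t : NNReal => B t ω :=
      measurable_pi_lambda _ fun t => hB.measurable (t : NNReal)
    rw [← hv, Measure.map_map (by fun_prop) hI]
    congr 1
    ext ω
    rw [Equiv.sum_comp e fun t : I => L (Pi.single t 1) * B ((t : NNReal) : ℝ) ω]
    have hbasis : (I.restrict fun t : NNReal => B t ω) =
        ∑ t : I, B (t : NNReal) ω • Pi.single t (1 : ℝ) := by
      ext t
      simp [Finset.sum_apply, Pi.single_apply]
    rw [Function.comp_apply, hbasis, map_sum]
    simp [mul_comm]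

lemma integral_eq_zero (hB : IsFractionalBrownianMotion B H) {t : ℝ} (ht : 0 ≤ t) :
    ∫ ω, B t ω = 0 := by
  obtain ⟨v, hv⟩ := hB.gaussian_fdd 1 (fun _ => t) (fun _ => ht) (fun _ => 1)
  simp only [Finset.univ_unique, one_mul, Finset.sum_const, Finset.card_singleton, one_smul] at hv
  have hlaw : HasLaw (B t) (gaussianReal 0 v) := ⟨(hB.measurable t).aemeasurable, hv⟩
  rw [hlaw.integral_eq, integral_id_gaussianReal]

lemma memLp_two (hB : IsFractionalBrownianMotion B H) {t : ℝ} (ht : 0 ≤ t) : MemLp (B t) 2 :=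
  (hB.isGaussianProcess.hasGaussianLaw_eval ⟨t, ht⟩).memLp_two

variable [IsProbabilityMeasure (ℙ : Measure Ω)]

lemma covariance_eq (hB : IsFractionalBrownianMotion B H) {s t : ℝ} (hs : 0 ≤ s) (ht : 0 ≤ t) :
    cov[B s, B t] = (s ^ (2 * H) + t ^ (2 * H) - |t - s| ^ (2 * H)) / 2 := by
  rw [covariance_eq_sub (hB.memLp_two hs) (hB.memLp_two ht), hB.integral_eq_zero hs, zero_mul,
    sub_zero]
  exact hB.covariance s t hs ht

lemma covariance_sub_sub (hB : IsFractionalBrownianMotion B H) {s t s' t' : ℝ}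
    (hs : 0 ≤ s) (ht : 0 ≤ t) (hs' : 0 ≤ s') (ht' : 0 ≤ t') :
    cov[B t - B s, B t' - B s'] =
      (|s' - t| ^ (2 * H) + |t' - s| ^ (2 * H) - |t' - t| ^ (2 * H) - |s' - s| ^ (2 * H)) / 2 := by
  rw [ProbabilityTheory.covariance_sub_sub (hB.memLp_two ht) (hB.memLp_two hs)
    (hB.memLp_two ht') (hB.memLp_two hs'), hB.covariance_eq ht ht', hB.covariance_eq ht hs',
    hB.covariance_eq hs ht', hB.covariance_eq hs hs']
  ring

end IsFractionalBrownianMotion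

/-- The increment of `B` over `[k/m, (k+1)/m]`, multiplied by `m ^ H` so that it has unit variance
when `B` is a fractional Brownian motion with Hurst parameter `H`. -/
noncomputable def normalizedIncrement {Ω : Type*} (B : ℝ → Ω → ℝ) (H : ℝ) (m k : ℕ) (ω : Ω) : ℝ :=
  (m : ℝ) ^ H * (B (((k : ℝ) + 1) / m) ω - B ((k : ℝ) / m) ω)

namespace IsFractionalBrownianMotion

variable {Ω : Type*} [MeasureSpace Ω] {B : ℝ → Ω → ℝ} {H : ℝ}

lemma measurable_normalizedIncrement (hB : IsFractionalBrownianMotion B H) (m k : ℕ) :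
    Measurable (normalizedIncrement B H m k) :=
  ((hB.measurable _).sub (hB.measurable _)).const_mul _

lemma isGaussianProcess_normalizedIncrement (hB : IsFractionalBrownianMotion B H) :
    IsGaussianProcess (fun p : ℕ × ℕ => normalizedIncrement B H p.1 p.2) (ℙ : Measure Ω) := by
  classical
  refine hB.isGaussianProcess.of_isGaussianProcess fun p => ?_
  let s : NNReal := p.2 / p.1
  let t : NNReal := (p.2 + 1) / p.1
  let I : Finset NNReal := {s, t}
  refine ⟨I, (p.1 : ℝ) ^ H • (.proj (R := ℝ) (φ := fun _ : I => ℝ) ⟨t, by simp [I]⟩ -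
    .proj ⟨s, by simp [I]⟩), fun ω => ?_⟩
  simp [normalizedIncrement, s, t]

lemma integral_normalizedIncrement (hB : IsFractionalBrownianMotion B H) (m k : ℕ) :
    ∫ ω, normalizedIncrement B H m k ω = 0 := by
  have := hB.isGaussianProcess.isProbabilityMeasure
  have hint : ∀ {t : ℝ}, 0 ≤ t → Integrable (B t) :=
    fun ht => (hB.memLp_two ht).integrable one_le_two
  simp only [normalizedIncrement]
  rw [integral_const_mul, integral_sub (hint (by positivity)) (hint (by positivity)),
    hB.integral_eq_zero (by positivity), hB.integral_eq_zero (by positivity), sub_zero, mul_zero]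

variable [IsProbabilityMeasure (ℙ : Measure Ω)]

lemma covariance_rpow_mul_sub (hB : IsFractionalBrownianMotion B H) {c s t s' t' : ℝ} (hc : 0 < c)
    (hs : 0 ≤ s) (ht : 0 ≤ t) (hs' : 0 ≤ s') (ht' : 0 ≤ t') :
    cov[fun ω => c ^ H * (B (t / c) ω - B (s / c) ω),
        fun ω => c ^ H * (B (t' / c) ω - B (s' / c) ω)] =
      (|s' - t| ^ (2 * H) + |t' - s| ^ (2 * H) - |t' - t| ^ (2 * H) - |s' - s| ^ (2 * H)) / 2 := by
  have hscale : ∀ x y : ℝ, |x / c - y / c| ^ (2 * H) = |x - y| ^ (2 * H) / (c ^ H * c ^ H) := by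
    intro x y
    rw [← sub_div, abs_div, abs_of_pos hc, div_rpow (abs_nonneg _) hc.le, two_mul,
      rpow_add hc]
  have hsub := hB.covariance_sub_sub (div_nonneg hs hc.le) (div_nonneg ht hc.le)
    (div_nonneg hs' hc.le) (div_nonneg ht' hc.le)
  simp only [hscale] at hsub
  rw [covariance_const_mul_left, covariance_const_mul_right]
  refine (congrArg (fun x => c ^ H * (c ^ H * x)) hsub).trans ?_
  have : c ^ H ≠ 0 := by positivity
  field_simp

lemma covariance_normalizedIncrement (hB : IsFractionalBrownianMotion B H) {m : ℕ} (hm : m ≠ 0)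
    (k l : ℕ) :
    cov[normalizedIncrement B H m k, normalizedIncrement B H m l] =
      fgnCorrelation H ((l : ℝ) - k) := by
  refine (hB.covariance_rpow_mul_sub (by positivity) (by positivity) (by positivity)
    (by positivity) (by positivity)).trans ?_
  rw [fgnCorrelation]
  ring_nf

lemma hasLaw_normalizedIncrement (hB : IsFractionalBrownianMotion B H) (hH : H ≠ 0) {m : ℕ}
    (hm : m ≠ 0) (k : ℕ) : HasLaw (normalizedIncrement B H m k) (gaussianReal 0 1) := by
  have hmeas := (hB.measurable_normalizedIncrement m k).aemeasurable (μ := ℙ)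
  refine ⟨hmeas, ?_⟩
  rw [(hB.isGaussianProcess_normalizedIncrement.hasGaussianLaw_eval (m, k)).map_eq_gaussianReal,
    hB.integral_normalizedIncrement, ← covariance_self hmeas, hB.covariance_normalizedIncrement hm,
    sub_self, fgnCorrelation_zero hH, toNNReal_one]

lemma rpow_div_two_le_covariance_normalizedIncrement (hB : IsFractionalBrownianMotion B H)
    (hH0 : 1 / 2 ≤ H) (hH1 : H ≤ 1) {m k : ℕ} (hk : k < m) :
    (m : ℝ) ^ (H - 1) / 2 ≤ cov[normalizedIncrement B H m k, normalizedIncrement B H 1 0] := by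
  have hm : (0 : ℝ) < m := mod_cast (Nat.zero_le k).trans_lt hk
  have hkm : (k : ℝ) + 1 ≤ m := mod_cast hk
  have hcov := hB.covariance_rpow_mul_sub hm (Nat.cast_nonneg k)
    (by positivity : 0 ≤ (k : ℝ) + 1) le_rfl hm.le
  rw [covariance_const_mul_right, div_self hm.ne', zero_div] at hcov
  have hY : normalizedIncrement B H 1 0 = fun ω => B 1 ω - B 0 ω := by
    ext ω
    simp [normalizedIncrement]
  have hxy := rpow_sub_one_le_rpow_sub_add_rpow_sub (Nat.cast_nonneg k)
    (sub_nonneg.2 hkm) (by linarith : 1 ≤ 2 * H) (by linarith)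
  rw [show (k : ℝ) + (m - (k + 1)) + 1 = m by ring, show (m : ℝ) - (k + 1) + 1 = m - k by ring]
    at hxy
  rw [zero_sub, zero_sub, abs_neg, abs_neg, Nat.abs_cast, abs_of_nonneg (by positivity),
    abs_of_nonneg (by linarith : (0 : ℝ) ≤ m - k), abs_of_nonneg (sub_nonneg.2 hkm)] at hcov
  rw [hY]
  refine le_of_mul_le_mul_left ?_ (by positivity : 0 < (m : ℝ) ^ H)
  calc (m : ℝ) ^ H * ((m : ℝ) ^ (H - 1) / 2) = (m : ℝ) ^ (2 * H - 1) / 2 := by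
        rw [mul_div_assoc', ← rpow_add hm]
        ring_nf
    _ ≤ (m : ℝ) ^ H * cov[normalizedIncrement B H m k, fun ω => B 1 ω - B 0 ω] :=
        (by linarith : _ ≤ _).trans_eq hcov.symm

end IsFractionalBrownianMotion

section HermiteVariation

open Polynomial

lemma hermiteVariation_eq_sum {Ω : Type*} [MeasureSpace Ω] (B : ℝ → Ω → ℝ) (H : ℝ) (q m : ℕ)
    (ω : Ω) : hermiteVariation B H q m ω =
      ∑ k ∈ Finset.range m, aeval (normalizedIncrement B H m k ω) (hermite q) :=
  rfl

namespace IsFractionalBrownianMotion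

variable {Ω : Type*} [MeasureSpace Ω] {B : ℝ → Ω → ℝ} {H : ℝ}

lemma measurable_hermiteVariation (hB : IsFractionalBrownianMotion B H) (q m : ℕ) :
    Measurable (hermiteVariation B H q m) :=
  Finset.measurable_fun_sum _ fun k _ =>
    (hermite q).continuous_aeval.measurable.comp (hB.measurable_normalizedIncrement m k)

lemma memLp_hermite_normalizedIncrement (hB : IsFractionalBrownianMotion B H) (q m k : ℕ) :
    MemLp (fun ω => aeval (normalizedIncrement B H m k ω) (hermite q)) 2 := by
  have := hB.isGaussianProcess.isProbabilityMeasure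
  have hgauss := hB.isGaussianProcess_normalizedIncrement.hasGaussianLaw_eval (m, k)
  simpa only [eval_map_algebraMap] using memLp_eval_of_forall_memLp
    (fun _ hp => hgauss.memLp hp) ((hermite q).map (algebraMap ℤ ℝ)) ENNReal.ofNat_ne_top

lemma memLp_hermiteVariation (hB : IsFractionalBrownianMotion B H) (q m : ℕ) :
    MemLp (hermiteVariation B H q m) 2 :=
  memLp_finsetSum _ fun k _ => hB.memLp_hermite_normalizedIncrement q m k

lemma isGaussianPolynomial_hermiteVariation (hB : IsFractionalBrownianMotion B H) (q m : ℕ) :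
    IsGaussianPolynomial (hermiteVariation B H q m) q ℙ := by
  have hgauss : HasGaussianLaw (fun ω (k : Fin m) => normalizedIncrement B H m k ω) ℙ :=
    have hproc := hB.isGaussianProcess_normalizedIncrement.comp_right fun k : Fin m => (m, (k : ℕ))
    (hproc.hasGaussianLaw Finset.univ).map_fun (.pi fun k : Fin m =>
      .proj (R := ℝ) (φ := fun _ : (Finset.univ : Finset (Fin m)) => ℝ) ⟨k, Finset.mem_univ k⟩)
  have hmean : ∫ ω, (fun k : Fin m => normalizedIncrement B H m k ω) = 0 := by
    ext k
    rw [eval_integral fun k => (hgauss.eval k).integrable]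
    exact hB.integral_normalizedIncrement m k
  have hsum := IsGaussianPolynomial.sum_eval hgauss hmean ((hermite q).map (algebraMap ℤ ℝ))
  rw [(hermite_monic q).natDegree_map, natDegree_hermite] at hsum
  convert hsum using 2 with ω
  simp only [hermiteVariation_eq_sum, eval_map_algebraMap, Finset.sum_range]

variable [IsProbabilityMeasure (ℙ : Measure Ω)]

lemma integral_hermite_normalizedIncrement_mul (hB : IsFractionalBrownianMotion B H) (hH : H ≠ 0)
    {m : ℕ} (hm : m ≠ 0) (k n l q : ℕ) :
    ∫ ω, aeval (normalizedIncrement B H m k ω) (hermite q) *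
        aeval (normalizedIncrement B H n l ω) (hermite q) =
      q.factorial * cov[normalizedIncrement B H m k, normalizedIncrement B H n l] ^ q :=
  integral_hermite_mul_hermite
    (hB.isGaussianProcess_normalizedIncrement.hasGaussianLaw_prodMk (s := (m, k)) (t := (n, l)))
    (hB.hasLaw_normalizedIncrement hH hm k) q

lemma integral_hermiteVariation_sq_le (hB : IsFractionalBrownianMotion B H) (hH0 : 1 / 2 ≤ H)
    (hH1 : H ≤ 1) {q m : ℕ} (hqH : 2 * q * (1 - H) < 1) (hm : m ≠ 0) :
    ∫ ω, hermiteVariation B H q m ω ^ 2 ≤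
      q.factorial * 2 ^ (q + 1) / (1 - 2 * q * (1 - H)) * (m : ℝ) ^ (2 - 2 * q * (1 - H)) := by
  have hint : ∀ k l, Integrable fun ω => aeval (normalizedIncrement B H m k ω) (hermite q) *
      aeval (normalizedIncrement B H m l ω) (hermite q) := fun k l =>
    (hB.memLp_hermite_normalizedIncrement q m k).integrable_mul
      (hB.memLp_hermite_normalizedIncrement q m l)
  simp_rw [hermiteVariation_eq_sum, sq, Finset.sum_mul_sum]
  rw [integral_finsetSum _ fun k _ => integrable_finsetSum _ fun l _ => hint k l]
  simp_rw [integral_finsetSum _ fun l _ => hint _ l]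
  calc ∑ k ∈ Finset.range m, ∑ l ∈ Finset.range m,
        ∫ ω, aeval (normalizedIncrement B H m k ω) (hermite q) *
          aeval (normalizedIncrement B H m l ω) (hermite q)
      = ∑ k ∈ Finset.range m,
          q.factorial * ∑ l ∈ Finset.range m, fgnCorrelation H ((l : ℝ) - k) ^ q := by
        simp_rw [hB.integral_hermite_normalizedIncrement_mul (by linarith : H ≠ 0) hm,
          hB.covariance_normalizedIncrement hm, Finset.mul_sum]
    _ ≤ ∑ k ∈ Finset.range m, q.factorial *
          (2 * (2 ^ q * ((m : ℝ) ^ (1 - 2 * q * (1 - H)) / (1 - 2 * q * (1 - H))))) := by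
        gcongr with k hk
        exact sum_range_fgnCorrelation_pow_le hH0 hH1 hqH (Finset.mem_range.1 hk)
    _ = _ := by
        have hexp : (m : ℝ) ^ (2 - 2 * q * (1 - H)) = m * (m : ℝ) ^ (1 - 2 * q * (1 - H)) := by
          rw [← rpow_one_add' (by positivity) (by linarith)]
          ring_nf
        rw [Finset.sum_const, Finset.card_range, nsmul_eq_mul, hexp]
        ring

lemma le_integral_hermiteVariation_mul_hermiteVariation_one (hB : IsFractionalBrownianMotion B H)
    (hH0 : 1 / 2 ≤ H) (hH1 : H ≤ 1) (q : ℕ) {m : ℕ} (hm : m ≠ 0) :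
    q.factorial / 2 ^ q * (m : ℝ) ^ (1 - q * (1 - H)) ≤
      ∫ ω, hermiteVariation B H q m ω * hermiteVariation B H q 1 ω := by
  have hint : ∀ k, Integrable fun ω => aeval (normalizedIncrement B H m k ω) (hermite q) *
      aeval (normalizedIncrement B H 1 0 ω) (hermite q) := fun k =>
    (hB.memLp_hermite_normalizedIncrement q m k).integrable_mul
      (hB.memLp_hermite_normalizedIncrement q 1 0)
  simp_rw [hermiteVariation_eq_sum B H q, Finset.sum_range_one, Finset.sum_mul]
  rw [integral_finsetSum _ fun k _ => hint k]
  calc q.factorial / 2 ^ q * (m : ℝ) ^ (1 - q * (1 - H))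
      = ∑ k ∈ Finset.range m, q.factorial * ((m : ℝ) ^ (H - 1) / 2) ^ q := by
        have hexp : (m : ℝ) ^ (1 - q * (1 - H)) = m * ((m : ℝ) ^ (H - 1)) ^ q := by
          rw [← rpow_mul_natCast (by positivity), mul_comm (m : ℝ), ← rpow_add_one (by positivity)]
          ring_nf
        rw [Finset.sum_const, Finset.card_range, nsmul_eq_mul, hexp, div_pow]
        ring
    _ ≤ ∑ k ∈ Finset.range m, ∫ ω, aeval (normalizedIncrement B H m k ω) (hermite q) *
          aeval (normalizedIncrement B H 1 0 ω) (hermite q) := by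
        refine Finset.sum_le_sum fun k hk => ?_
        rw [hB.integral_hermite_normalizedIncrement_mul (by linarith : H ≠ 0) hm]
        gcongr
        exact hB.rpow_div_two_le_covariance_normalizedIncrement hH0 hH1 (Finset.mem_range.1 hk)

end IsFractionalBrownianMotion

end HermiteVariation

namespace IsFractionalBrownianMotion

variable {Ω : Type*} [MeasureSpace Ω] {B : ℝ → Ω → ℝ} {H : ℝ}
  [IsProbabilityMeasure (ℙ : Measure Ω)]

lemma integral_rescaled_hermiteVariation_sq_le (hB : IsFractionalBrownianMotion B H)
    (hH0 : 1 / 2 ≤ H) (hH1 : H ≤ 1) {q m : ℕ} (hqH : 2 * q * (1 - H) < 1) (hm : m ≠ 0) :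
    ∫ ω, (((m : ℝ) ^ (1 - q * (1 - H)))⁻¹ * hermiteVariation B H q m ω) ^ 2 ≤
      q.factorial * 2 ^ (q + 1) / (1 - 2 * q * (1 - H)) := by
  have hexp : (m : ℝ) ^ (2 - 2 * q * (1 - H)) = ((m : ℝ) ^ (1 - q * (1 - H))) ^ 2 := by
    rw [← rpow_mul_natCast (by positivity)]
    push_cast
    ring_nf
  simp_rw [mul_pow]
  rw [integral_const_mul, inv_pow, inv_mul_le_iff₀ (by positivity), mul_comm, ← hexp]
  exact hB.integral_hermiteVariation_sq_le hH0 hH1 hqH hm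

lemma exists_forall_measureReal_abs_rescaled_hermiteVariation_le
    (hB : IsFractionalBrownianMotion B H) (hH0 : 1 / 2 ≤ H) (hH1 : H ≤ 1) {q : ℕ}
    (hqH : 2 * q * (1 - H) < 1) {η : ℝ} (hη : 0 < η) :
    ∃ δ > 0, ∀ n : ℕ,
      (ℙ : Measure Ω).real {ω | |(((n + 1 : ℕ) : ℝ) ^ (1 - q * (1 - H)))⁻¹ *
        hermiteVariation B H q (n + 1) ω| ≤ δ} ≤ η := by
  have : 0 < 1 - 2 * q * (1 - H) := sub_pos.2 hqH
  refine exists_forall_measureReal_abs_le_of_integral_mul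
    (fun n => (hB.isGaussianPolynomial_hermiteVariation q (n + 1)).const_mul _)
    (fun n => (hB.measurable_hermiteVariation q (n + 1)).const_mul _)
    (fun n => (hB.memLp_hermiteVariation q (n + 1)).const_mul _)
    (fun n => hB.integral_rescaled_hermiteVariation_sq_le hH0 hH1 hqH n.succ_ne_zero)
    (by positivity) (hB.memLp_hermiteVariation q 1) (c := q.factorial / 2 ^ q) (fun n => ?_)
    (by positivity) hη
  simp_rw [mul_assoc]
  rw [integral_const_mul, le_inv_mul_iff₀ (by positivity), mul_comm]
  exact hB.le_integral_hermiteVariation_mul_hermiteVariation_one hH0 hH1 q n.succ_ne_zero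

lemma tendsto_spitzerSeries_rescaled_hermiteVariation (hB : IsFractionalBrownianMotion B H)
    (hH0 : 1 / 2 ≤ H) (hH1 : H ≤ 1) {q : ℕ} (hqH : 2 * q * (1 - H) < 1) :
    Tendsto (fun ε => spitzerSeries (1 - q * (1 - H)) (fun n x =>
        (ℙ : Measure Ω).real {ω | x < |(((n + 1 : ℕ) : ℝ) ^ (1 - q * (1 - H)))⁻¹ *
          hermiteVariation B H q (n + 1) ω|}) ε / -log ε)
      (𝓝[>] 0) (𝓝 (1 / (1 - q * (1 - H)))) := by
  refine tendsto_spitzerSeries_measureReal (r := 2) (by linarith) two_pos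
    (C := q.factorial * 2 ^ (q + 1) / (1 - 2 * q * (1 - H)))
    (fun n => ((hB.measurable_hermiteVariation q (n + 1)).const_mul _).aemeasurable)
    (fun n => ?_) (fun n => ?_)
    fun η hη => hB.exists_forall_measureReal_abs_rescaled_hermiteVariation_le hH0 hH1 hqH hη
  · simpa only [rpow_two, sq_abs] using
      ((hB.memLp_hermiteVariation q (n + 1)).const_mul _).integrable_sq
  · simpa only [rpow_two, sq_abs] using
      hB.integral_rescaled_hermiteVariation_sq_le hH0 hH1 hqH n.succ_ne_zero

end IsFractionalBrownianMotion

lemma mul_rpow_two_mul_lt_abs_iff {y : ℝ} (hy : 0 < y) (x a v : ℝ) :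
    x * y ^ (2 * a) < |v| ↔ x * y ^ a < |(y ^ a)⁻¹ * v| := by
  rw [abs_mul, abs_inv, abs_of_pos (by positivity : 0 < y ^ a),
    lt_inv_mul_iff₀ (by positivity), two_mul, rpow_add hy]
  ring_nf

theorem stmt_7_general {Ω : Type*} [MeasureSpace Ω] [IsProbabilityMeasure (ℙ : Measure Ω)]
    (q : ℕ) (hq : 1 ≤ q) (H : ℝ) (hH0 : 1 - 1 / (2 * q) < H) (hH1 : H ≤ 1)
    (B : ℝ → Ω → ℝ) (hB : IsFractionalBrownianMotion B H) :
    Tendsto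
      (fun ε : ℝ =>
        (1 / (-Real.log ε)) *
          ∑' n : ℕ, (1 / ((n : ℝ) + 1)) *
            (ℙ {ω | ε * ((n : ℝ) + 1) ^ (2 - 2 * q * (1 - H)) <
              |hermiteVariation B H q (n + 1) ω|}).toReal)
      (𝓝[>] 0) (𝓝 (1 / (1 - q * (1 - H)))) := by
  have hq1 : (1 : ℝ) ≤ q := mod_cast hq
  have hqH : 2 * q * (1 - H) < 1 := by
    rw [mul_comm, ← lt_div_iff₀ (by positivity)]
    linarith
  have hH : 1 / 2 ≤ H := by nlinarith
  have hexp : 2 - 2 * q * (1 - H) = 2 * (1 - q * (1 - H)) := by ring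
  refine (hB.tendsto_spitzerSeries_rescaled_hermiteVariation hH hH1 hqH).congr fun ε => ?_
  simp only [spitzerSeries, measureReal_def, hexp, Nat.cast_add_one,
    mul_rpow_two_mul_lt_abs_iff (Nat.cast_add_one_pos _)]
  ring

theorem stmt_7 {Ω : Type*} [MeasureSpace Ω] [IsProbabilityMeasure (ℙ : Measure Ω)]
    (q : ℕ) (hq : 2 ≤ q) (H : ℝ) (hH0 : 1 - 1 / (2 * q) < H) (hH1 : H < 1)
    (B : ℝ → Ω → ℝ) (hB : IsFractionalBrownianMotion B H) :
    Tendsto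
      (fun ε : ℝ =>
        (1 / (-Real.log ε)) *
          ∑' n : ℕ, (1 / ((n : ℝ) + 1)) *
            (ℙ {ω | ε * ((n : ℝ) + 1) ^ (2 - 2 * q * (1 - H)) <
              |hermiteVariation B H q (n + 1) ω|}).toReal)
      (𝓝[>] 0) (𝓝 (1 / (1 - q * (1 - H)))) :=
  stmt_7_general q (by omega) H hH0 hH1.le B hB
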